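/- arXiv:2305.01541 — 4 statements merged into one kernel-verified Lean document; each statement's English description precedes it below -/
import Mathlib

section
/- Let N ≥ 1, 0 < s < 1, and let G be an Orlicz function satisfying hypotheses (H) with index p. Let u ∈ L^G(ℝ^N) and suppose that liminf_{δ→0⁺} [1/G(δ^{1−s})] ∫_{ℝ^N} ∫_{B(x,δ)} G(|u(x)−u(y)|/|x−y|^s) |x−y|^{−N} dy dx < ∞. Then u ∈ W^{1,p}(ℝ^N); that is, u ∈ L^p(ℝ^N) and u has a weak gradient V ∈ L^p(ℝ^N; ℝ^N), i.e. ∫ u ∂φ/∂x_i dx = −∫ V_i φ dx for every φ ∈ C_c^∞(ℝ^N) and every i = 1,…,N. -/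
/-!
The lower bound `G t ≥ c t ^ p` gives `u ∈ L^p`, and together with `G t = o(t)` it forces `p > 1`.
The weak gradient is obtained by duality with `L^q`, `1 / p + 1 / q = 1`.

After the change of variables `y = x + δ z`, the truncated energy controls, with `a = δ ^ (1 - s)`,
the integral over the unit ball in `z` of `∫ G (a |(u (x + δ z) - u x) / δ|) dx` (`energy_lower`).
Regular variation and convexity of `G` give a Young-type inequality
`t τ ^ (p - 1) ≤ C (τ ^ p + ε + G (a t) / G a)`, valid for all small `a`, all `t ≥ 0` and `τ` in a
bounded interval (`HypH.young`). Applied to difference quotients with `τ ^ (p - 1) = |φ|`, it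
bounds `∫∫ (u (x + δ z) - u x) / δ φ x dx dz` along a sequence `δ → 0` on which the normalised
energies stay bounded. By discrete integration by parts and dominated convergence
(`tendsto_avg`) the limit is an average over directions of `-∫ u ∂_z φ`; on a ball of directions
that is not centred at the origin this average is a nonzero multiple of `∫ u ∂_i φ`.
Hence `|∫ u ∂_i φ| ≤ C (∫ |φ| ^ q + 1)` for all test functions (`exists_bound`), and rescaling `φ`
yields `|∫ u ∂_i φ| ≤ 2 C ‖φ‖_q`.

Finally a functional on test functions that is bounded in `L^q` is represented by an `L^p`
function (`riesz_test`). This is deduced from the Radon-Nikodym theorem on a finite measure space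
(`dual_finite`), after transferring `L^q(ℝ^N)` to `L^q` of a Gaussian measure.
-/

open MeasureTheory Metric Filter Set
open scoped ENNReal RealInnerProductSpace Topology NNReal

noncomputable section

/-- Euclidean space `ℝ^N`. -/
abbrev Euc (N : ℕ) := EuclideanSpace ℝ (Fin N)

/-- `G : [0,∞) → [0,∞)` is an Orlicz function: continuous, convex, increasing,
`G 0 = 0`, superlinear at `0`, and satisfying the Δ₂ condition. -/
def IsOrlicz (G : ℝ → ℝ) : Prop :=
  (∀ t, 0 ≤ t → 0 ≤ G t) ∧
  ContinuousOn G (Set.Ici 0) ∧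
  ConvexOn ℝ (Set.Ici 0) G ∧
  StrictMonoOn G (Set.Ici 0) ∧
  G 0 = 0 ∧
  Tendsto (fun t => G t / t) (𝓝[>] (0:ℝ)) (𝓝 0) ∧
  ∃ c > 2, ∀ t ≥ (0:ℝ), G (2 * t) ≤ c * G t

/-- `f` is regularly varying at `0` (from the right) with index `ρ`. -/
def RegVaryAtZero (f : ℝ → ℝ) (ρ : ℝ) : Prop :=
  ∀ lam > (0:ℝ), Tendsto (fun t => f (lam * t) / f t) (𝓝[>] (0:ℝ)) (𝓝 (lam ^ ρ))

/-- Hypotheses (H): `G` is a (piecewise) smooth Orlicz function, regularly varying at `0`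
of index `p`, its derivative is regularly varying at `0` of index `p - 1`, and
`ℓ(t) = G(t)/t^p` is bounded below by a positive constant. -/
def HypH (G : ℝ → ℝ) (p : ℝ) : Prop :=
  IsOrlicz G ∧ RegVaryAtZero G p ∧
  (∃ g : ℝ → ℝ, (∀ t > (0:ℝ), HasDerivAt G (g t) t) ∧ RegVaryAtZero g (p - 1)) ∧
  ∃ c > (0:ℝ), ∀ t > (0:ℝ), c ≤ G t / t ^ p

/-- The modular `Φ_G(u) = ∫_{ℝ^N} G(|u|) dx`. -/
def PhiG (N : ℕ) (G : ℝ → ℝ) (u : Euc N → ℝ) : ℝ≥0∞ :=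
  ∫⁻ x, ENNReal.ofReal (G |u x|)

/-- The truncated nonlocal energy
`Ψ_{s,G,δ}(u) = ∫_{ℝ^N} ∫_{B(x,δ)} G(|u(x)-u(y)|/|x-y|^s) |x-y|^{-N} dy dx`. -/
def PsiG (N : ℕ) (s δ : ℝ) (G : ℝ → ℝ) (u : Euc N → ℝ) : ℝ≥0∞ :=
  ∫⁻ x, ∫⁻ y in ball x δ,
    ENNReal.ofReal (G (|u x - u y| / ‖x - y‖ ^ s) / ‖x - y‖ ^ (N : ℝ))

/-- `V` is the weak gradient of `u`:
`∫ u ∂φ/∂xᵢ = -∫ Vᵢ φ` for every test function `φ ∈ C_c^∞` and every `i`. -/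
def HasWeakGradient (N : ℕ) (u : Euc N → ℝ) (V : Euc N → Euc N) : Prop :=
  LocallyIntegrable u volume ∧ LocallyIntegrable V volume ∧
  ∀ φ : Euc N → ℝ, ContDiff ℝ (⊤ : ℕ∞) φ → HasCompactSupport φ → ∀ i : Fin N,
    ∫ x, u x * fderiv ℝ φ x (EuclideanSpace.single i 1) = -∫ x, V x i * φ x

/-- `K_{N,p} = ∫_{𝕊^{N-1}} |w·e|^p dσ(w)`, where `σ` is the surface measure on the
unit sphere of `ℝ^N`. -/
def sphereK (N : ℕ) (p : ℝ) (e : Euc N) : ℝ :=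
  ∫ w : sphere (0 : Euc N) 1, |(⟪(w : Euc N), e⟫)| ^ p
    ∂((volume : Measure (Euc N)).toSphere)

/-- Surface area of the unit sphere `𝕊^{N-1} ⊂ ℝ^N`. -/
def sphereArea (N : ℕ) : ℝ :=
  (((volume : Measure (Euc N)).toSphere) Set.univ).toReal

end


/-! ### The rescaled Orlicz function near zero -/

/-- Since `G t = o(t)` at `0` while `G t ≥ c t ^ p`, the index exceeds one. -/
theorem HypH.one_lt {G : ℝ → ℝ} {p : ℝ} (hG : HypH G p) : 1 < p := by
  obtain ⟨⟨-, -, -, -, -, hlim, -⟩, -, -, c, hc, hlow⟩ := hG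
  by_contra! hp
  have h1 : ∀ᶠ t in 𝓝[>] (0:ℝ), G t / t < c := hlim.eventually (gt_mem_nhds hc)
  have h2 : ∀ᶠ t in 𝓝[>] (0:ℝ), t < 1 := nhdsWithin_le_nhds (gt_mem_nhds one_pos)
  obtain ⟨t, ⟨h1, h2⟩, h0⟩ := ((h1.and h2).and self_mem_nhdsWithin).exists
  have h0 : 0 < t := h0
  have h3 := hlow t h0
  rw [le_div_iff₀ (by positivity)] at h3
  rw [div_lt_iff₀ h0] at h1
  have h4 : t ≤ t ^ p := by
    simpa using Real.rpow_le_rpow_of_exponent_ge h0 h2.le hp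
  nlinarith

theorem IsOrlicz.pos {G : ℝ → ℝ} (hG : IsOrlicz G) {t : ℝ} (ht : 0 < t) : 0 < G t := by
  obtain ⟨-, -, -, hm, h0, -⟩ := hG
  have := hm (mem_Ici.2 (le_refl (0:ℝ))) (mem_Ici.2 ht.le) ht
  rwa [h0] at this

theorem IsOrlicz.mono {G : ℝ → ℝ} (hG : IsOrlicz G) {a b : ℝ} (ha : 0 ≤ a) (hab : a ≤ b) :
    G a ≤ G b :=
  hG.2.2.2.1.monotoneOn (mem_Ici.2 ha) (mem_Ici.2 (ha.trans hab)) hab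

/-- Convexity and `G 0 = 0` give the affine minorant `(t / l - 1) G(al)` of `t ↦ G(at)`. -/
theorem IsOrlicz.affine_le {G : ℝ → ℝ} (hG : IsOrlicz G) {a l t : ℝ} (ha : 0 < a) (hl : 0 < l)
    (ht : 0 ≤ t) : (t / l - 1) * G (a * l) ≤ G (a * t) := by
  have hGl := hG.pos (mul_pos ha hl)
  rcases le_total t l with h | h
  · have h1 : t / l ≤ 1 := (div_le_one hl).2 h
    have h2 := hG.1 (a * t) (by positivity)
    nlinarith
  · have ht' : 0 < t := hl.trans_le h
    have h1 : l / t ≤ 1 := (div_le_one ht').2 h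
    have h2 := hG.2.2.1.2 (mem_Ici.2 (le_refl (0:ℝ))) (mem_Ici.2 (by positivity : 0 ≤ a * t))
      (sub_nonneg.2 h1) (by positivity : 0 ≤ l / t) (by ring)
    simp only [smul_eq_mul, hG.2.2.2.2.1, mul_zero, zero_add] at h2
    rw [show l / t * (a * t) = a * l by field_simp] at h2
    have h3 : t / l * G (a * l) ≤ G (a * t) := by
      calc t / l * G (a * l) ≤ t / l * (l / t * G (a * t)) := by gcongr
        _ = G (a * t) := by field_simp
    linarith

/-- The estimate for a single slope parameter `l`. -/
theorem HypH.eventually_single {G : ℝ → ℝ} {p : ℝ} (hG : HypH G p) {l : ℝ} (hl : 0 < l) :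
    ∀ᶠ a in 𝓝[>] (0:ℝ), ∀ t, 0 ≤ t →
      t * l ^ (p - 1) ≤ 4 * l ^ p + 2 * (G (a * t) / G a) := by
  have h := hG.2.1 l hl
  have hlp : 0 < l ^ p := by positivity
  have h1 := h.eventually (lt_mem_nhds (show l ^ p / 2 < l ^ p by linarith))
  have h2 := h.eventually (gt_mem_nhds (show l ^ p < 2 * l ^ p by linarith))
  filter_upwards [h1, h2, self_mem_nhdsWithin] with a h1 h2 ha t ht
  have ha : 0 < a := ha
  have hGa := hG.1.pos ha
  have h3 := hG.1.affine_le ha hl ht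
  rw [mul_comm l a] at h1 h2
  set m := G (a * l) / G a with hm
  have h4 : (t / l - 1) * m ≤ G (a * t) / G a := by
    rw [hm, ← mul_div_assoc]; gcongr
  have h5 : t * l ^ (p - 1) = t / l * l ^ p := by
    rw [Real.rpow_sub_one hl.ne']; ring
  have h6 : 0 ≤ t / l := by positivity
  rw [h5]
  nlinarith

/-- A Young-type inequality for the rescaled function `t ↦ G(at)/G(a)`, uniform for `τ` in a
bounded interval: as `a → 0` the rescaled function dominates the supporting lines of `t ^ p`,
up to constants and an arbitrarily small additive error. -/
theorem HypH.young {G : ℝ → ℝ} {p : ℝ} (hG : HypH G p) {ε : ℝ} (hε : 0 < ε) (T : ℝ) :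
    ∀ᶠ a in 𝓝[>] (0:ℝ), ∀ τ, 0 ≤ τ → τ ≤ T → ∀ t, 0 ≤ t →
      t * τ ^ (p - 1) ≤ 4 * 2 ^ p * (τ ^ p + ε + G (a * t) / G a) := by
  have hp := hG.one_lt
  have h2p : (1:ℝ) ≤ 2 ^ p := Real.one_le_rpow (by norm_num) (by linarith)
  set l := ε ^ (1 / p) with hl
  have hl0 : 0 < l := by positivity
  have hlp : l ^ p = ε := by
    rw [hl, ← Real.rpow_mul hε.le]; field_simp; simp
  have key : ∀ n : ℕ, ∀ᶠ a in 𝓝[>] (0:ℝ), ∀ τ, 0 ≤ τ → τ ≤ 2 ^ n * l → ∀ t, 0 ≤ t →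
      t * τ ^ (p - 1) ≤ 4 * 2 ^ p * (τ ^ p + ε + G (a * t) / G a) := by
    intro n
    induction n with
    | zero =>
      filter_upwards [hG.eventually_single hl0, self_mem_nhdsWithin] with a h ha τ h0 h1 t ht
      have ha : 0 < a := ha
      have hQ : 0 ≤ G (a * t) / G a :=
        div_nonneg (hG.1.1 _ (by positivity)) (hG.1.pos ha).le
      have h3 : τ ^ (p - 1) ≤ l ^ (p - 1) :=
        Real.rpow_le_rpow h0 (by simpa using h1) (by linarith)
      have h4 : 0 ≤ τ ^ p := by positivity
      have h5 := h t ht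
      rw [hlp] at h5
      have h6 : t * τ ^ (p - 1) ≤ t * l ^ (p - 1) := by gcongr
      nlinarith [mul_nonneg (sub_nonneg.2 h2p) (add_nonneg (add_nonneg h4 hε.le) hQ)]
    | succ n ih =>
      have hl1 : 0 < 2 ^ (n + 1) * l := by positivity
      filter_upwards [ih, hG.eventually_single hl1, self_mem_nhdsWithin] with a ih h ha τ h0 h1 t ht
      rcases le_total τ (2 ^ n * l) with h2 | h2
      · exact ih τ h0 h2 t ht
      have ha : 0 < a := ha
      have hQ : 0 ≤ G (a * t) / G a :=
        div_nonneg (hG.1.1 _ (by positivity)) (hG.1.pos ha).le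
      have h3 : τ ^ (p - 1) ≤ (2 ^ (n + 1) * l) ^ (p - 1) :=
        Real.rpow_le_rpow h0 h1 (by linarith)
      have h4 : (2 ^ (n + 1) * l) ^ p ≤ 2 ^ p * τ ^ p := by
        rw [← Real.mul_rpow (by norm_num) h0]
        refine Real.rpow_le_rpow hl1.le ?_ (by linarith)
        rw [pow_succ]; linarith
      have h5 := h t ht
      have h6 : t * τ ^ (p - 1) ≤ t * (2 ^ (n + 1) * l) ^ (p - 1) := by gcongr
      nlinarith [mul_nonneg (sub_nonneg.2 h2p) hQ, mul_nonneg (sub_nonneg.2 h2p) hε.le]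
  obtain ⟨n, hn⟩ := pow_unbounded_of_one_lt (T / l) (one_lt_two : (1:ℝ) < 2)
  rw [div_lt_iff₀ hl0] at hn
  filter_upwards [key n] with a h τ h0 h1
  exact h τ h0 (h1.trans hn.le)

theorem norm_toLp_rpow {α : Type*} [MeasurableSpace α] {m : Measure α} {q : ℝ}
    (hq : 0 < q) {g : α → ℝ} (hg : MemLp g (ENNReal.ofReal q) m) :
    ‖hg.toLp g‖ = (∫ x, |g x| ^ q ∂m) ^ (1 / q) := by
  rw [Lp.norm_toLp, hg.eLpNorm_eq_integral_rpow_norm (by simpa using hq) ENNReal.ofReal_ne_top,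
    ENNReal.toReal_ofReal (by positivity), ENNReal.toReal_ofReal hq.le]
  simp

/-! ### Duality of Lebesgue spaces over a finite measure -/

section dual
variable {α : Type*} [MeasurableSpace α] {m : Measure α} [IsFiniteMeasure m]

/-- The signed measure `A ↦ L(1_A)` attached to a continuous linear functional on `L^q`. -/
noncomputable def dualSigned {q : ℝ≥0∞} [Fact (1 ≤ q)] (hq : q ≠ ⊤) (L : Lp ℝ q m →L[ℝ] ℝ) :
    SignedMeasure α where
  measureOf' A := by
    classical
    exact if hA : MeasurableSet A then L (indicatorConstLp q hA (measure_ne_top m A) 1) else 0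
  empty' := by simp
  not_measurable' A hA := by simp [hA]
  m_iUnion' f hf hd := by
    have hUf : MeasurableSet (⋃ i, f i) := MeasurableSet.iUnion hf
    simp only [hf, hUf, dite_true]
    have hU : ∀ s : Finset ℕ, MeasurableSet (⋃ i ∈ s, f i) := fun s =>
      Finset.measurableSet_biUnion s fun i _ => hf i
    have key : ∀ s : Finset ℕ,
        ∑ i ∈ s, L (indicatorConstLp q (hf i) (measure_ne_top m (f i)) 1) =
          L (indicatorConstLp q (hU s) (measure_ne_top m _) 1) := by
      intro s
      classical
      induction s using Finset.induction_on with
      | empty => simp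
      | insert a s ha ih =>
        rw [Finset.sum_insert ha, ih, ← map_add]
        congr 1
        rw [← indicatorConstLp_disjoint_union (hf a) (hU s) (measure_ne_top m _)
          (measure_ne_top m _)]
        · congr 1
          simp
        · rw [Set.disjoint_iUnion₂_right]
          intro i hi
          exact hd (by rintro rfl; exact ha hi)
    unfold HasSum
    simp only [key, SummationFilter.unconditional_filter]
    refine (L.continuous.tendsto _).comp (tendsto_indicatorConstLp_set hq ?_)
    have hsd : ∀ s : Finset ℕ, symmDiff (⋃ i ∈ s, f i) (⋃ i, f i) =
        (⋃ i, f i) \ ⋃ i ∈ s, f i := fun s =>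
      symmDiff_of_le (iUnion₂_subset fun i _ => subset_iUnion f i)
    simp only [hsd]
    have h0 : ⋂ s : Finset ℕ, ((⋃ i, f i) \ ⋃ i ∈ s, f i) = ∅ := by
      refine eq_empty_of_forall_notMem fun x hx => ?_
      rw [mem_iInter] at hx
      obtain ⟨i, hi⟩ := mem_iUnion.1 (hx ∅).1
      exact (hx {i}).2 (by simpa using hi)
    have := tendsto_measure_iInter_atTop (μ := m)
      (s := fun s : Finset ℕ => (⋃ i, f i) \ ⋃ i ∈ s, f i)
      (fun s => (hUf.diff (hU s)).nullMeasurableSet)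
      (fun s t hst => sdiff_subset_sdiff_right (biUnion_subset_biUnion_left hst))
      ⟨∅, measure_ne_top m _⟩
    rwa [h0, measure_empty] at this

/-- Riesz representation on a finite measure space: every continuous linear functional on `L^q`
is integration against a function of the conjugate class `L^p`. The density comes from the
Radon-Nikodym theorem; its `L^p` bound comes from testing with `sign f * φ ^ (1 / q)`, where `φ`
runs through the simple functions below `|f| ^ p`. -/
theorem dual_finite {p q : ℝ} (hpq : p.HolderConjugate q) [Fact (1 ≤ ENNReal.ofReal q)]
    (L : Lp ℝ (ENNReal.ofReal q) m →L[ℝ] ℝ) :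
    ∃ f : α → ℝ, MemLp f (ENNReal.ofReal p) m ∧
      ∀ g : Lp ℝ (ENNReal.ofReal q) m, L g = ∫ x, f x * g x ∂m := by
  have hp0 : 0 < p := hpq.pos
  have hq0 : 0 < q := hpq.symm.pos
  have hqne : ENNReal.ofReal q ≠ 0 := by simpa using hq0
  set ν := dualSigned ENNReal.ofReal_ne_top L with hν
  have hac : ν ≪ᵥ m.toENNRealVectorMeasure := by
    refine VectorMeasure.AbsolutelyContinuous.mk fun A hA h => ?_
    rw [Measure.toENNRealVectorMeasure_apply_measurable hA] at h
    have h0 : indicatorConstLp (ENNReal.ofReal q) hA (measure_ne_top m A) (1:ℝ) = 0 := by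
      rw [← norm_eq_zero, norm_indicatorConstLp hqne ENNReal.ofReal_ne_top]
      simp [Measure.real, h, hq0.ne', hq0.le]
    simp [hν, dualSigned, hA, h0]
  have hrn := SignedMeasure.withDensityᵥ_rnDeriv_eq ν m hac
  set f := ν.rnDeriv m with hf
  have hfi : Integrable f m := SignedMeasure.integrable_rnDeriv ν m
  have hfm : Measurable f := SignedMeasure.measurable_rnDeriv ν m
  have hind : ∀ A (hA : MeasurableSet A),
      L (indicatorConstLp _ hA (measure_ne_top m A) 1) = ∫ x in A, f x ∂m := by
    intro A hA
    rw [← withDensityᵥ_apply hfi hA, hrn]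
    simp [hν, dualSigned, hA]
  have hindc : ∀ (c : ℝ) A (hA : MeasurableSet A),
      L (indicatorConstLp _ hA (measure_ne_top m A) c) =
        ∫ x, f x * A.indicator (fun _ => c) x ∂m := by
    intro c A hA
    have h1 : indicatorConstLp (ENNReal.ofReal q) hA (measure_ne_top m A) c =
        c • indicatorConstLp (ENNReal.ofReal q) hA (measure_ne_top m A) (1:ℝ) := by
      rw [indicatorConstLp, indicatorConstLp, ← MemLp.toLp_const_smul]
      congr 1
      ext x
      by_cases hx : x ∈ A <;> simp [hx]
    rw [h1, map_smul, hind A hA, smul_eq_mul, ← integral_const_mul, ← integral_indicator hA]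
    congr 1
    ext x
    by_cases hx : x ∈ A <;> simp [hx, mul_comm]
  have hbd : ∀ g : SimpleFunc α ℝ, Integrable (fun x => f x * g x) m := by
    intro g
    obtain ⟨C, hC⟩ := g.exists_forall_norm_le
    exact hfi.mul_bdd g.stronglyMeasurable.aestronglyMeasurable (Eventually.of_forall hC)
  have hmem : ∀ g : SimpleFunc α ℝ, MemLp g (ENNReal.ofReal q) m := fun g =>
    g.memLp_of_isFiniteMeasure _ _
  have hsimple : ∀ g : SimpleFunc α ℝ, L ((hmem g).toLp g) = ∫ x, f x * g x ∂m := by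
    intro g
    induction g using SimpleFunc.induction with
    | const c hA =>
      rename_i A
      refine Eq.trans ?_ ((hindc c A hA).trans ?_)
      · congr 1
      · congr 1
    | add hd h1 h2 =>
      rename_i g₁ g₂
      have : (hmem (g₁ + g₂)).toLp _ = (hmem g₁).toLp _ + (hmem g₂).toLp _ := by
        rw [← MemLp.toLp_add]; rfl
      rw [this, map_add, h1, h2, ← integral_add (hbd _) (hbd _)]
      congr 1
      ext x
      simp [mul_add]
  have hfp : MemLp f (ENNReal.ofReal p) m := by
    refine ⟨hfm.aestronglyMeasurable, ?_⟩
    -- the bound `∫ φ ≤ ‖L‖ ^ p` for every simple `φ ≤ |f| ^ p` gives `∫ |f| ^ p ≤ ‖L‖ ^ p`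
    rw [eLpNorm_lt_top_iff_lintegral_rpow_enorm_lt_top (by simpa using hp0)
      ENNReal.ofReal_ne_top, ENNReal.toReal_ofReal hp0.le, lintegral_eq_nnreal]
    refine lt_of_le_of_lt (iSup₂_le fun φ hφ => ?_)
      (ENNReal.ofReal_lt_top (r := ‖L‖ ^ p))
    have hφ' : ∀ x, (φ x : ℝ) ≤ |f x| ^ p := by
      intro x
      have h1 := hφ x
      rw [← ofReal_norm, ENNReal.ofReal_rpow_of_nonneg (norm_nonneg _) hp0.le] at h1
      have h2 := ENNReal.toReal_mono ENNReal.ofReal_ne_top h1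
      rwa [ENNReal.toReal_ofReal (by positivity)] at h2
    set h : SimpleFunc α ℝ := φ.map (fun y : ℝ≥0 => (y : ℝ) ^ (1 / q)) with hh
    set g : SimpleFunc α ℝ :=
      SimpleFunc.piecewise {x | 0 ≤ f x} (measurableSet_le measurable_const hfm) h (-h) with hg
    have hhx : ∀ x, h x = (φ x : ℝ) ^ (1 / q) := fun x => rfl
    have hh0 : ∀ x, 0 ≤ h x := fun x => by rw [hhx]; positivity
    have hgx : ∀ x, |g x| = h x := by
      intro x
      by_cases hx : 0 ≤ f x <;> simp [hg, hx, abs_of_nonneg (hh0 x)]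
    have hfg : ∀ x, f x * g x = |f x| * h x := by
      intro x
      by_cases hx : 0 ≤ f x
      · simp [hg, hx, abs_of_nonneg hx]
      · simp [hg, hx, abs_of_neg (not_le.1 hx)]
    have hpow : ∀ x, |g x| ^ q = φ x := by
      intro x
      rw [hgx, hhx, ← Real.rpow_mul (by positivity), one_div_mul_cancel hq0.ne', Real.rpow_one]
    have hle : ∀ x, (φ x : ℝ) ≤ f x * g x := by
      intro x
      have h1 : (φ x : ℝ) ^ (1 / p) ≤ |f x| := by
        calc (φ x : ℝ) ^ (1 / p) ≤ (|f x| ^ p) ^ (1 / p) :=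
              Real.rpow_le_rpow (by positivity) (hφ' x) (by positivity)
          _ = |f x| := by
              rw [← Real.rpow_mul (abs_nonneg _), mul_one_div_cancel hp0.ne', Real.rpow_one]
      have h2 : (φ x : ℝ) = (φ x : ℝ) ^ (1 / p) * (φ x : ℝ) ^ (1 / q) := by
        rw [← Real.rpow_add_of_nonneg (by positivity) (by positivity) (by positivity)]
        have : 1 / p + 1 / q = 1 := by simpa [one_div] using hpq.inv_add_inv_eq_one
        rw [this, Real.rpow_one]
      rw [hfg, hhx]
      calc (φ x : ℝ) = (φ x : ℝ) ^ (1 / p) * (φ x : ℝ) ^ (1 / q) := h2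
        _ ≤ |f x| * (φ x : ℝ) ^ (1 / q) := by gcongr
    have hφi : Integrable (fun x => (φ x : ℝ)) m :=
      (SimpleFunc.integrable_of_isFiniteMeasure (φ.map ((↑) : ℝ≥0 → ℝ)))
    set I := ∫ x, (φ x : ℝ) ∂m with hI
    have hI0 : 0 ≤ I := integral_nonneg fun x => NNReal.coe_nonneg _
    have hIle : I ≤ ‖L‖ * I ^ (1 / q) := by
      calc I ≤ ∫ x, f x * g x ∂m := integral_mono hφi (hbd g) hle
        _ = L ((hmem g).toLp g) := (hsimple g).symm
        _ ≤ ‖L‖ * ‖(hmem g).toLp g‖ := (le_abs_self _).trans (L.le_opNorm _)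
        _ = ‖L‖ * I ^ (1 / q) := by
          rw [norm_toLp_rpow hq0]
          simp only [hpow]
          rfl
    have hIp : I ≤ ‖L‖ ^ p := by
      rcases hI0.eq_or_lt with h0 | h0
      · rw [← h0]; positivity
      have h1 : I = I ^ (1 / p) * I ^ (1 / q) := by
        rw [← Real.rpow_add h0]
        have : 1 / p + 1 / q = 1 := by simpa [one_div] using hpq.inv_add_inv_eq_one
        rw [this, Real.rpow_one]
      have h2 : I ^ (1 / p) ≤ ‖L‖ := by
        have h3 : 0 < I ^ (1 / q) := by positivity
        refine le_of_mul_le_mul_right ?_ h3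
        rw [← h1]
        exact hIle
      calc I = (I ^ (1 / p)) ^ p := by
            rw [← Real.rpow_mul hI0, one_div_mul_cancel hp0.ne', Real.rpow_one]
        _ ≤ ‖L‖ ^ p := Real.rpow_le_rpow (by positivity) h2 hp0.le
    rw [← SimpleFunc.lintegral_eq_lintegral]
    refine le_trans (le_of_eq ?_) (ENNReal.ofReal_le_ofReal hIp)
    rw [hI, ofReal_integral_eq_lintegral_ofReal hφi (Eventually.of_forall fun x => by positivity)]
    simp
  refine ⟨f, hfp, fun g => ?_⟩
  have : ENNReal.HolderTriple (ENNReal.ofReal p) (ENNReal.ofReal q) 1 := hpq.ennrealOfReal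
  have : Fact (1 ≤ ENNReal.ofReal p) := ⟨by
    simpa using hpq.lt.le⟩
  have hcont : Continuous fun g : Lp ℝ (ENNReal.ofReal q) m => ∫ x, f x * g x ∂m := by
    have := ((ContinuousLinearMap.mul ℝ ℝ).lpPairing m (ENNReal.ofReal p) (ENNReal.ofReal q)
      (hfp.toLp f)).continuous
    refine this.congr fun g => ?_
    rw [ContinuousLinearMap.lpPairing_eq_integral]
    refine integral_congr_ae ?_
    filter_upwards [hfp.coeFn_toLp] with x hx
    simp [hx]
  have hdense := Lp.simpleFunc.dense (E := ℝ) (μ := m) (p := ENNReal.ofReal q)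
    ENNReal.ofReal_ne_top
  refine congrFun (Continuous.ext_on hdense L.continuous hcont ?_) g
  intro g hg
  have h1 := Lp.simpleFunc.toSimpleFunc_eq_toFun ⟨g, hg⟩
  set g' := Lp.simpleFunc.toSimpleFunc ⟨g, hg⟩
  have h2 : (hmem g').toLp g' = g := by
    ext1
    exact (hmem g').coeFn_toLp.trans h1
  change L g = ∫ x, f x * g x ∂m
  conv_lhs => rw [← h2]
  rw [hsimple]
  refine integral_congr_ae ?_
  filter_upwards [h1] with x hx
  rw [hx]
end dual

/-! ### Energy and difference quotients -/

theorem IsOrlicz.continuous_abs {G : ℝ → ℝ} (hG : IsOrlicz G) : Continuous fun t => G |t| :=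
  hG.2.1.comp_continuous _root_.continuous_abs fun t => mem_Ici.2 (abs_nonneg t)

/-- Rescaling `y = x + δ z` bounds the truncated energy from below by an average over the unit
ball of modulars of difference quotients, since `|δ z|^s ≤ δ^s` and `|δ z|^N ≤ δ^N` there. -/
theorem energy_lower {N : ℕ} {s δ : ℝ} (hs0 : 0 < s) (hδ : 0 < δ) {G : ℝ → ℝ}
    (hG : IsOrlicz G) {u : Euc N → ℝ} (hum : Measurable u) :
    ∫⁻ z in ball (0 : Euc N) 1, ∫⁻ x : Euc N,
      ENNReal.ofReal (G (δ ^ (1 - s) * |(u (x + δ • z) - u x) / δ|)) ≤ PsiG N s δ G u := by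
  have ha : 0 < δ ^ (1 - s) := by positivity
  have hmeas : Measurable fun w : Euc N × Euc N =>
      ENNReal.ofReal (G (δ ^ (1 - s) * |(u (w.2 + δ • w.1) - u w.2) / δ|)) := by
    have h1 : ∀ w : Euc N × Euc N, G (δ ^ (1 - s) * |(u (w.2 + δ • w.1) - u w.2) / δ|) =
        (fun t => G |t|) (δ ^ (1 - s) * ((u (w.2 + δ • w.1) - u w.2) / δ)) := by
      intro w
      simp only [abs_mul, abs_of_pos ha]
    simp only [h1]
    refine ENNReal.measurable_ofReal.comp (hG.continuous_abs.measurable.comp ?_)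
    have h2 : Measurable fun w : Euc N × Euc N => u (w.2 + δ • w.1) :=
      hum.comp (measurable_snd.add (measurable_fst.const_smul δ))
    exact ((h2.sub (hum.comp measurable_snd)).div_const δ).const_mul _
  rw [lintegral_lintegral_swap hmeas.aemeasurable]
  refine lintegral_mono fun x => ?_
  set F : Euc N → ℝ≥0∞ := fun y =>
    ENNReal.ofReal (G (|u x - u y| / ‖x - y‖ ^ s) / ‖x - y‖ ^ (N : ℝ)) with hF
  set k : Euc N → ℝ≥0∞ := (ball x δ).indicator F with hk
  have hcv : ∫⁻ z, k (x + δ • z) = ENNReal.ofReal ((δ ^ N)⁻¹) * ∫⁻ y, k y := by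
    rw [← lintegral_add_left_eq_self k x]
    have h1 := (Homeomorph.smulOfNeZero δ hδ.ne').measurableEmbedding.lintegral_map
      (μ := (volume : Measure (Euc N))) (fun y => k (x + y))
    have h2 := Measure.map_addHaar_smul (volume : Measure (Euc N)) hδ.ne'
    simp only [finrank_euclideanSpace, Fintype.card_fin] at h2
    change ∫⁻ a, k (x + a) ∂(Measure.map (fun y => δ • y) volume) = ∫⁻ a, k (x + δ • a) at h1
    rw [← h1]
    erw [h2]
    rw [lintegral_smul_measure, abs_of_pos (by positivity)]
    rfl
  have hpt : ∀ z, (ball (0 : Euc N) 1).indicator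
      (fun z => ENNReal.ofReal (G (δ ^ (1 - s) * |(u (x + δ • z) - u x) / δ|))) z ≤
      ENNReal.ofReal (δ ^ N) * k (x + δ • z) := by
    intro z
    by_cases hz : z ∈ ball (0 : Euc N) 1
    swap
    · simp [hz]
    have hz1 : ‖z‖ < 1 := by simpa using hz
    have hnorm : ‖δ • z‖ = δ * ‖z‖ := by rw [norm_smul, Real.norm_of_nonneg hδ.le]
    have hmem : x + δ • z ∈ ball x δ := by
      rw [mem_ball_iff_norm, add_sub_cancel_left, hnorm]
      nlinarith
    rw [indicator_of_mem hz, hk, indicator_of_mem hmem, hF,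
      ← ENNReal.ofReal_mul (by positivity)]
    refine ENNReal.ofReal_le_ofReal ?_
    have e1 : ‖x - (x + δ • z)‖ = δ * ‖z‖ := by
      rw [← hnorm, ← norm_neg]; congr 1; abel
    rw [e1, abs_sub_comm (u x), abs_div, abs_of_pos hδ]
    rcases eq_or_ne z 0 with rfl | hz0
    · simp [hG.2.2.2.2.1]
    have hzp : 0 < ‖z‖ := norm_pos_iff.2 hz0
    set d := |u (x + δ • z) - u x| with hd
    have hd0 : 0 ≤ d := abs_nonneg _
    have h1 : δ * ‖z‖ ≤ δ := by nlinarith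
    have h2 : δ ^ (1 - s) * (d / δ) ≤ d / (δ * ‖z‖) ^ s := by
      rw [Real.rpow_sub hδ, Real.rpow_one]
      have : δ / δ ^ s * (d / δ) = d / δ ^ s := by field_simp
      rw [this]
      have : (δ * ‖z‖) ^ s ≤ δ ^ s := Real.rpow_le_rpow (by positivity) h1 hs0.le
      gcongr
    have h3 := hG.mono (by positivity) h2
    have h4 : (δ * ‖z‖) ^ (N : ℝ) ≤ δ ^ N := by
      rw [Real.rpow_natCast]
      gcongr
    have h5 : 0 ≤ G (d / (δ * ‖z‖) ^ s) := hG.1 _ (by positivity)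
    calc G (δ ^ (1 - s) * (d / δ)) ≤ G (d / (δ * ‖z‖) ^ s) := h3
      _ ≤ δ ^ N * (G (d / (δ * ‖z‖) ^ s) / (δ * ‖z‖) ^ (N : ℝ)) := by
        rw [← mul_div_assoc, le_div_iff₀ (by positivity)]
        nlinarith
  rw [← lintegral_indicator measurableSet_ball, ← lintegral_indicator measurableSet_ball]
  calc (∫⁻ z, (ball (0 : Euc N) 1).indicator
          (fun z => ENNReal.ofReal (G (δ ^ (1 - s) * |(u (x + δ • z) - u x) / δ|))) z)
    _ ≤ ∫⁻ z, ENNReal.ofReal (δ ^ N) * k (x + δ • z) := lintegral_mono hpt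
    _ = ENNReal.ofReal (δ ^ N) * ∫⁻ z, k (x + δ • z) :=
        lintegral_const_mul' _ _ ENNReal.ofReal_ne_top
    _ = ∫⁻ y, k y := by
        rw [hcv, ← mul_assoc, ← ENNReal.ofReal_mul (by positivity),
          mul_inv_cancel₀ (by positivity), ENNReal.ofReal_one, one_mul]

/-- The mean value property of linear functionals, from the reflection `z ↦ 2c - z`. -/
theorem integral_ball_clm {N : ℕ} (l : Euc N →L[ℝ] ℝ) (c : Euc N) (r : ℝ) :
    ∫ z in ball c r, l z = volume.real (ball c r) * l c := by
  have hpre : (fun z => (c + c) - z) ⁻¹' ball c r = ball c r := by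
    ext z
    simp only [mem_preimage, mem_ball_iff_norm]
    rw [← norm_neg]
    congr! 2
    abel
  have h1 := (Measure.measurePreserving_sub_left (volume : Measure (Euc N))
    (c + c)).setIntegral_preimage_emb (Homeomorph.subLeft (c + c)).measurableEmbedding
    (fun z => l z) (ball c r)
  rw [hpre] at h1
  have hli : IntegrableOn (fun z => l z) (ball c r) :=
    (l.continuous.continuousOn.integrableOn_compact (isCompact_closedBall c r)).mono_set
      ball_subset_closedBall
  have hc : IntegrableOn (fun _ : Euc N => l (c + c)) (ball c r) := by
    simp [integrableOn_const_iff, measure_ball_lt_top]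
  simp only [map_sub] at h1
  rw [integral_sub hc hli, setIntegral_const, smul_eq_mul, map_add] at h1
  linarith

/-- The difference quotients of a test function are dominated by a bounded function supported in
a fixed compact set, uniformly for steps of length at most one. -/
theorem diffQuot_bound {N : ℕ} {φ : Euc N → ℝ} (hφ : ContDiff ℝ (⊤ : ℕ∞) φ)
    (hc : HasCompactSupport φ) :
    ∃ (L : ℝ) (K : Set (Euc N)), 0 ≤ L ∧ IsCompact K ∧ ∀ δ z x, 0 < δ → δ ≤ 1 → ‖z‖ ≤ 1 →
      |(φ (x - δ • z) - φ x) / δ| ≤ K.indicator (fun _ => L) x := by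
  obtain ⟨L, hL⟩ := (hφ.of_le (by exact_mod_cast le_top) :
    ContDiff ℝ 1 φ).lipschitzWith_of_hasCompactSupport hc (by norm_num)
  refine ⟨L, cthickening 1 (tsupport φ), L.2, hc.isCompact.cthickening, fun δ z x h0 h1 hz => ?_⟩
  have hn : ‖δ • z‖ ≤ δ := by
    rw [norm_smul, Real.norm_of_nonneg h0.le]; nlinarith
  by_cases hx : x ∈ cthickening 1 (tsupport φ)
  · rw [indicator_of_mem hx, abs_div, abs_of_pos h0, div_le_iff₀ h0]
    have := hL.dist_le_mul (x - δ • z) x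
    rw [Real.dist_eq, dist_eq_norm, sub_sub_cancel_left, norm_neg] at this
    exact this.trans (mul_le_mul_of_nonneg_left hn L.2)
  · have hx0 : φ x = 0 := image_eq_zero_of_notMem_tsupport fun h =>
      hx (self_subset_cthickening _ h)
    have hy0 : φ (x - δ • z) = 0 := image_eq_zero_of_notMem_tsupport fun h =>
      hx (mem_cthickening_of_dist_le _ _ _ _ h (by
        rw [dist_eq_norm, sub_sub_cancel]; exact hn.trans h1))
    simp [hx0, hy0, hx]

theorem tendsto_diffQuot {N : ℕ} {φ : Euc N → ℝ} (hφ : ContDiff ℝ (⊤ : ℕ∞) φ) (x z : Euc N) :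
    Tendsto (fun δ : ℝ => (φ (x - δ • z) - φ x) / δ) (𝓝[>] 0) (𝓝 (-(fderiv ℝ φ x z))) := by
  have h1 : HasFDerivAt φ (fderiv ℝ φ x) x :=
    (hφ.differentiable (by simp)).differentiableAt.hasFDerivAt
  have h2 := (h1.hasLineDerivAt (-z)).tendsto_slope_zero_right
  rw [map_neg] at h2
  refine h2.congr fun δ => ?_
  rw [smul_neg, ← sub_eq_add_neg, smul_eq_mul, div_eq_inv_mul]

/-- As `δ → 0⁺`, integrals over `z ∈ D` of the weak difference quotients of `u` with step `δ z`
converge to the integral over `D` of the distributional derivative `-∫ u ∂_z φ`. -/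
theorem tendsto_avg {N : ℕ} {u φ : Euc N → ℝ} (hu : LocallyIntegrable u volume)
    (hum : Measurable u) (hφ : ContDiff ℝ (⊤ : ℕ∞) φ) (hc : HasCompactSupport φ) {D : Set (Euc N)}
    (hDm : MeasurableSet D) (hD : D ⊆ ball 0 1) :
    Tendsto (fun δ : ℝ => ∫ z in D, ∫ x, u x * ((φ (x - δ • z) - φ x) / δ)) (𝓝[>] 0)
      (𝓝 (∫ z in D, -(∫ x, u x • fderiv ℝ φ x) z)) := by
  obtain ⟨L, K, hL, hK, hb⟩ := diffQuot_bound hφ hc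
  have hui : Integrable (fun x => |u x| * K.indicator (fun _ => L) x) := by
    have h1 := (hu.integrableOn_isCompact hK).norm.mul_const L
    rw [← IntegrableOn, ← integrable_indicator_iff hK.measurableSet] at h1
    refine h1.congr (Eventually.of_forall fun x => ?_)
    by_cases hx : x ∈ K <;> simp [hx]
  have hδ : ∀ᶠ δ : ℝ in 𝓝[>] 0, 0 < δ ∧ δ ≤ 1 := by
    filter_upwards [self_mem_nhdsWithin, nhdsWithin_le_nhds (Iic_mem_nhds one_pos)] with δ h1 h2
    exact ⟨h1, h2⟩
  have hbb : ∀ δ z x, 0 < δ → δ ≤ 1 → ‖z‖ ≤ 1 →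
      ‖u x * ((φ (x - δ • z) - φ x) / δ)‖ ≤ |u x| * K.indicator (fun _ => L) x := by
    intro δ z x h0 h1 hz
    rw [norm_mul]
    exact mul_le_mul_of_nonneg_left (hb δ z x h0 h1 hz) (norm_nonneg _)
  have hφm := hφ.continuous.measurable
  have hmeas : ∀ δ : ℝ, Measurable fun w : Euc N × Euc N =>
      u w.2 * ((φ (w.2 - δ • w.1) - φ w.2) / δ) := by
    intro δ
    have h2 : Measurable fun w : Euc N × Euc N => φ (w.2 - δ • w.1) :=
      hφm.comp (measurable_snd.sub (measurable_fst.const_smul δ))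
    exact (hum.comp measurable_snd).mul ((h2.sub (hφm.comp measurable_snd)).div_const δ)
  have hfd : Integrable (fun x => u x • fderiv ℝ φ x) :=
    hu.integrable_smul_right_of_hasCompactSupport (hφ.continuous_fderiv (by simp)) (hc.fderiv ℝ)
  have hvD : volume D < ⊤ := (measure_mono hD).trans_lt measure_ball_lt_top
  refine tendsto_integral_filter_of_dominated_convergence
    (fun _ => ∫ x, |u x| * K.indicator (fun _ => L) x) ?_ ?_ ?_ ?_
  · exact Eventually.of_forall fun δ =>
      ((hmeas δ).stronglyMeasurable.integral_prod_right').aestronglyMeasurable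
  · filter_upwards [hδ] with δ ⟨h0, h1⟩
    refine (ae_restrict_iff' hDm).2 (Eventually.of_forall fun z hz => ?_)
    have hz1 : ‖z‖ ≤ 1 := by simpa using (mem_ball_zero_iff.1 (hD hz)).le
    exact norm_integral_le_of_norm_le hui (Eventually.of_forall fun x => hbb δ z x h0 h1 hz1)
  · exact integrableOn_const hvD.ne
  · refine (ae_restrict_iff' hDm).2 (Eventually.of_forall fun z hz => ?_)
    have hz1 : ‖z‖ ≤ 1 := by simpa using (mem_ball_zero_iff.1 (hD hz)).le
    have h1 : -(∫ x, u x • fderiv ℝ φ x) z = ∫ x, u x * -(fderiv ℝ φ x z) := by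
      rw [ContinuousLinearMap.integral_apply hfd, ← integral_neg]
      simp
    rw [h1]
    refine tendsto_integral_filter_of_dominated_convergence
      (fun x => |u x| * K.indicator (fun _ => L) x) ?_ ?_ hui ?_
    · exact Eventually.of_forall fun δ =>
        ((hmeas δ).comp (measurable_const.prodMk measurable_id)).aestronglyMeasurable
    · filter_upwards [hδ] with δ ⟨h0, h1⟩
      exact Eventually.of_forall fun x => hbb δ z x h0 h1 hz1
    · exact Eventually.of_forall fun x => (tendsto_diffQuot hφ x z).const_mul _

/-- Discrete integration by parts. -/
theorem integral_diffQuot {N : ℕ} {u φ : Euc N → ℝ} (hu : LocallyIntegrable u volume)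
    (hφ : ContDiff ℝ (⊤ : ℕ∞) φ) (hc : HasCompactSupport φ) (δ : ℝ) (z : Euc N) :
    ∫ x, u x * ((φ (x - δ • z) - φ x) / δ) = ∫ x, (u (x + δ • z) - u x) / δ * φ x := by
  have hi1 : Integrable fun x => u x * φ x :=
    hu.integrable_smul_right_of_hasCompactSupport hφ.continuous hc
  have hi2 : Integrable fun x => u x * φ (x - δ • z) := by
    refine hu.integrable_smul_right_of_hasCompactSupport
      (hφ.continuous.comp (continuous_sub_right _)) ?_
    exact hc.comp_homeomorph (Homeomorph.subRight (δ • z))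
  have hi3 : Integrable fun x => u (x + δ • z) * φ x := by
    simpa using hi2.comp_add_right (δ • z)
  have e : ∫ x, u x * φ (x - δ • z) = ∫ x, u (x + δ • z) * φ x := by
    rw [← integral_add_right_eq_self _ (δ • z)]
    simp
  have e1 : ∀ x, u x * ((φ (x - δ • z) - φ x) / δ) =
      (u x * φ (x - δ • z) - u x * φ x) / δ := fun x => by ring
  have e2 : ∀ x, (u (x + δ • z) - u x) / δ * φ x =
      (u (x + δ • z) * φ x - u x * φ x) / δ := fun x => by ring
  simp only [e1, e2, integral_div]
  rw [integral_sub hi2 hi1, integral_sub hi3 hi1, e]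

/-! ### Bounding the distributional gradient -/

/-- The Young-type inequality is used with slope `τ(x) = |φ(x)| ^ (1 / (p - 1))`, so that
`τ ^ (p - 1) = |φ|` and `τ ^ p = |φ| ^ q`. Its additive error `ε` is only paid on the support of
`φ`, and is chosen so that the total cost is at most one. -/
theorem weak_bound {N : ℕ} {s p q : ℝ} (hs0 : 0 < s) (hs1 : s < 1) {G : ℝ → ℝ} (hG : HypH G p)
    (hpq : p.HolderConjugate q) {u φ : Euc N → ℝ} (hu : LocallyIntegrable u volume)
    (hum : Measurable u) {M : ℝ≥0∞}
    (hM : ∃ᶠ δ : ℝ in 𝓝[>] 0, ENNReal.ofReal (1 / G (δ ^ (1 - s))) * PsiG N s δ G u ≤ M)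
    (hφ : ContDiff ℝ (⊤ : ℕ∞) φ) (hc : HasCompactSupport φ) {D : Set (Euc N)}
    (hDm : MeasurableSet D) (hD : D ⊆ ball 0 1) :
    ‖∫ z in D, -(∫ x, u x • fderiv ℝ φ x) z‖ₑ ≤
      ENNReal.ofReal (4 * 2 ^ p) *
        ((∫⁻ x, ENNReal.ofReal (|φ x| ^ q)) * volume D + volume D + M) := by
  have hp1 : 0 < p - 1 := by linarith [hpq.lt]
  have hqp : 1 / (p - 1) * p = q := by
    rw [hpq.conjugate_eq]; ring
  set K := tsupport φ with hK
  have hKv : volume K < ⊤ := hc.isCompact.measure_lt_top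
  set ε : ℝ := 1 / (volume.real K + 1) with hε
  have hKr : 0 ≤ volume.real K := measureReal_nonneg
  have hε0 : 0 < ε := by positivity
  have hεK : ENNReal.ofReal ε * volume K ≤ 1 := by
    rw [← ENNReal.ofReal_toReal hKv.ne, ← ENNReal.ofReal_mul hε0.le, ← ENNReal.ofReal_one]
    refine ENNReal.ofReal_le_ofReal ?_
    change ε * volume.real K ≤ 1
    rw [hε, one_div, inv_mul_le_iff₀ (by positivity)]
    linarith
  obtain ⟨B, hB⟩ := hc.exists_bound_of_continuous hφ.continuous
  have hB0 : 0 ≤ B := (norm_nonneg _).trans (hB 0)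
  -- the substitution `a = δ ^ (1 - s)` sends `0⁺` to `0⁺`
  have hlim : Tendsto (fun δ : ℝ => δ ^ (1 - s)) (𝓝[>] 0) (𝓝[>] 0) := by
    refine tendsto_nhdsWithin_iff.2 ⟨?_, ?_⟩
    · have := (Real.continuousAt_rpow_const (0:ℝ) (1 - s) (Or.inr (by linarith))).tendsto
      rw [Real.zero_rpow (by linarith)] at this
      exact this.mono_left nhdsWithin_le_nhds
    · filter_upwards [self_mem_nhdsWithin] with δ hδ
      exact Real.rpow_pos_of_pos hδ _
  have hyoung := hlim.eventually (hG.young hε0 (B ^ (1 / (p - 1))))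
  have hconv := (tendsto_avg hu hum hφ hc hDm hD).enorm
  refine le_of_tendsto_of_frequently hconv ?_
  refine (hM.and_eventually (hyoung.and self_mem_nhdsWithin)).mono ?_
  rintro δ ⟨hMδ, hy, hδ⟩
  have hδ : 0 < δ := hδ
  set a := δ ^ (1 - s) with ha
  have ha0 : 0 < a := by positivity
  have hGa := hG.1.pos ha0
  set C := ENNReal.ofReal (4 * 2 ^ p) with hC
  have hpt : ∀ z x, ‖(u (x + δ • z) - u x) / δ * φ x‖ₑ ≤
      C * (ENNReal.ofReal (|φ x| ^ q) + K.indicator (fun _ => ENNReal.ofReal ε) x +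
        ENNReal.ofReal (1 / G a) * ENNReal.ofReal (G (a * |(u (x + δ • z) - u x) / δ|))) := by
    intro z x
    by_cases hx : x ∈ K
    swap
    · rw [image_eq_zero_of_notMem_tsupport hx]
      simp
    set t := |(u (x + δ • z) - u x) / δ| with ht
    have ht0 : 0 ≤ t := abs_nonneg _
    have hGt : 0 ≤ G (a * t) := hG.1.1 _ (by positivity)
    have h1 := hy (|φ x| ^ (1 / (p - 1))) (by positivity)
      (Real.rpow_le_rpow (abs_nonneg _) (hB x) (by positivity)) t ht0
    rw [← Real.rpow_mul (abs_nonneg _), ← Real.rpow_mul (abs_nonneg _),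
      one_div_mul_cancel hp1.ne', Real.rpow_one, hqp] at h1
    rw [indicator_of_mem hx, ← ENNReal.ofReal_add (by positivity) hε0.le,
      ← ENNReal.ofReal_mul (by positivity), ← ENNReal.ofReal_add (by positivity) (by positivity),
      hC, ← ENNReal.ofReal_mul (by positivity), ← ofReal_norm]
    refine ENNReal.ofReal_le_ofReal ?_
    rw [norm_mul, Real.norm_eq_abs, Real.norm_eq_abs, one_div_mul_eq_div]
    exact h1
  set E : Euc N → ℝ≥0∞ := fun z => ∫⁻ x : Euc N,
      ENNReal.ofReal (G (a * |(u (x + δ • z) - u x) / δ|)) with hE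
  set I := ∫⁻ x, ENNReal.ofReal (|φ x| ^ q) with hI
  have hφm : Measurable fun x => ENNReal.ofReal (|φ x| ^ q) := by
    have := hφ.continuous.measurable
    fun_prop
  have hinner : ∀ z, ∫⁻ x, ‖(u (x + δ • z) - u x) / δ * φ x‖ₑ ≤
      C * (I + 1 + ENNReal.ofReal (1 / G a) * E z) := by
    intro z
    refine (lintegral_mono (hpt z)).trans ?_
    rw [lintegral_const_mul' _ _ ENNReal.ofReal_ne_top,
      lintegral_add_left (f := fun x => ENNReal.ofReal (|φ x| ^ q) +
        K.indicator (fun _ => ENNReal.ofReal ε) x)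
        (hφm.add (measurable_const.indicator hc.isCompact.measurableSet)),
      lintegral_add_left hφm, lintegral_const_mul' _ _ ENNReal.ofReal_ne_top,
      lintegral_indicator_const hc.isCompact.measurableSet]
    gcongr
  calc ‖∫ z in D, ∫ x, u x * ((φ (x - δ • z) - φ x) / δ)‖ₑ
      = ‖∫ z in D, ∫ x, (u (x + δ • z) - u x) / δ * φ x‖ₑ := by
        simp only [integral_diffQuot hu hφ hc]
    _ ≤ ∫⁻ z in D, ‖∫ x, (u (x + δ • z) - u x) / δ * φ x‖ₑ := enorm_integral_le_lintegral_enorm _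
    _ ≤ ∫⁻ z in D, C * (I + 1 + ENNReal.ofReal (1 / G a) * E z) :=
        lintegral_mono fun z => (enorm_integral_le_lintegral_enorm _).trans (hinner z)
    _ = C * ((I + 1) * volume D + ENNReal.ofReal (1 / G a) * ∫⁻ z in D, E z) := by
        rw [lintegral_const_mul' _ _ ENNReal.ofReal_ne_top, lintegral_add_left measurable_const,
          lintegral_const_mul' _ _ ENNReal.ofReal_ne_top, setLIntegral_const]
    _ ≤ C * ((I + 1) * volume D + M) := by
        gcongr
        refine le_trans ?_ hMδ
        gcongr
        exact (lintegral_mono_set hD).trans (energy_lower hs0 hδ hG.1 hum)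
    _ = _ := by rw [add_mul, one_mul]

/-- Averaging over the ball of radius `1 / 2` about `e_i / 2`, which lies in the unit ball and is
centred away from the origin, turns the directional average into the `i`-th derivative. -/
theorem exists_bound {N : ℕ} {s p q : ℝ} (hs0 : 0 < s) (hs1 : s < 1) {G : ℝ → ℝ} (hG : HypH G p)
    (hpq : p.HolderConjugate q) {u : Euc N → ℝ} (hu : LocallyIntegrable u volume)
    (hum : Measurable u) {M : ℝ≥0∞} (hMt : M ≠ ⊤)
    (hM : ∃ᶠ δ : ℝ in 𝓝[>] 0, ENNReal.ofReal (1 / G (δ ^ (1 - s))) * PsiG N s δ G u ≤ M)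
    (i : Fin N) :
    ∃ C : ℝ, 0 ≤ C ∧ ∀ φ : Euc N → ℝ, ContDiff ℝ (⊤ : ℕ∞) φ → HasCompactSupport φ →
      |∫ x, u x * fderiv ℝ φ x (EuclideanSpace.single i 1)| ≤ C * ((∫ x, |φ x| ^ q) + 1) := by
  set c : Euc N := (1 / 2 : ℝ) • EuclideanSpace.single i 1 with hcdef
  have hcn : ‖c‖ = 1 / 2 := by
    rw [hcdef, norm_smul]; simp
  set D := ball c (1 / 2) with hDdef
  have hD : D ⊆ ball 0 1 := by
    refine ball_subset_ball' ?_
    rw [dist_zero_right, hcn]; norm_num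
  set v := volume.real D with hv
  have hv0 : 0 < v := by
    rw [hv, Measure.real, ENNReal.toReal_pos_iff]
    exact ⟨measure_ball_pos _ _ (by norm_num), measure_ball_lt_top⟩
  have hvD : volume D = ENNReal.ofReal v := (ENNReal.ofReal_toReal measure_ball_lt_top.ne).symm
  set m := M.toReal with hm
  have hm0 : 0 ≤ m := ENNReal.toReal_nonneg
  refine ⟨2 / v * (4 * 2 ^ p * (v + m)), by positivity, fun φ hφ hc => ?_⟩
  have hq0 : 0 < q := hpq.symm.pos
  have hqi : Integrable fun x => |φ x| ^ q := by
    refine Continuous.integrable_of_hasCompactSupport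
      (hφ.continuous.abs.rpow_const fun _ => Or.inr hq0.le) ?_
    exact hc.comp_left (g := fun t : ℝ => |t| ^ q) (by simp [hq0.ne'])
  have hfd : Integrable (fun x => u x • fderiv ℝ φ x) :=
    hu.integrable_smul_right_of_hasCompactSupport (hφ.continuous_fderiv (by simp)) (hc.fderiv ℝ)
  have h := weak_bound hs0 hs1 hG hpq hu hum hM hφ hc (measurableSet_ball) hD
  set J := ∫ x, |φ x| ^ q with hJ
  have hJ0 : 0 ≤ J := integral_nonneg fun x => by positivity
  rw [integral_neg, integral_ball_clm, hcdef, map_smul, ContinuousLinearMap.integral_apply hfd,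
    ← ofReal_integral_eq_lintegral_ofReal hqi (Eventually.of_forall fun x => by positivity),
    hvD, ← ENNReal.ofReal_toReal hMt, ← ENNReal.ofReal_mul hJ0,
    ← ENNReal.ofReal_add (by positivity) (by positivity),
    ← ENNReal.ofReal_add (by positivity) (by positivity),
    ← ENNReal.ofReal_mul (by positivity), ← ofReal_norm,
    ENNReal.ofReal_le_ofReal_iff (by positivity), norm_neg] at h
  simp only [smul_apply, smul_eq_mul, norm_mul, Real.norm_eq_abs] at h
  rw [← hcdef, ← hDdef, ← hv, abs_of_pos hv0, abs_of_pos (by norm_num : (0:ℝ) < 1 / 2)] at h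
  set A := |∫ x, u x * fderiv ℝ φ x (EuclideanSpace.single i 1)| with hA
  have h2 : A = 2 / v * (v * (1 / 2 * A)) := by field_simp
  rw [h2, mul_assoc (2 / v), mul_assoc (4 * 2 ^ p)]
  refine mul_le_mul_of_nonneg_left (h.trans (mul_le_mul_of_nonneg_left ?_ (by positivity)))
    (by positivity)
  change J * v + v + m ≤ _
  nlinarith [mul_nonneg hm0 hJ0]

/-- The inhomogeneous bound is applied to `φ / r` with `r` slightly larger than the `L^q` norm. -/
theorem exists_bound_norm {N : ℕ} {q : ℝ} (hq0 : 0 < q) {u : Euc N → ℝ} {e : Euc N} {C : ℝ}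
    (hC0 : 0 ≤ C)
    (hC : ∀ φ : Euc N → ℝ, ContDiff ℝ (⊤ : ℕ∞) φ → HasCompactSupport φ →
      |∫ x, u x * fderiv ℝ φ x e| ≤ C * ((∫ x, |φ x| ^ q) + 1))
    {φ : Euc N → ℝ} (hφ : ContDiff ℝ (⊤ : ℕ∞) φ) (hc : HasCompactSupport φ) :
    |∫ x, u x * fderiv ℝ φ x e| ≤ 2 * C * (∫ x, |φ x| ^ q) ^ (1 / q) := by
  set J := ∫ x, |φ x| ^ q with hJ
  have hJ0 : 0 ≤ J := integral_nonneg fun x => by positivity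
  have key : ∀ r, J ^ (1 / q) < r →
      |∫ x, u x * fderiv ℝ φ x e| ≤ 2 * C * r := by
    intro r hr
    have hJ1 : 0 ≤ J ^ (1 / q) := by positivity
    have hr0 : 0 < r := hJ1.trans_lt hr
    have hJr : J ≤ r ^ q := by
      calc J = (J ^ (1 / q)) ^ q := by
            rw [← Real.rpow_mul hJ0, one_div_mul_cancel hq0.ne', Real.rpow_one]
        _ ≤ r ^ q := Real.rpow_le_rpow hJ1 hr.le hq0.le
    have h := hC (fun x => r⁻¹ * φ x) (contDiff_const.mul hφ)
      (hc.comp_left (g := fun t : ℝ => r⁻¹ * t) (by simp))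
    have e1 : ∀ x, fderiv ℝ (fun x => r⁻¹ * φ x) x e = r⁻¹ * fderiv ℝ φ x e := by
      intro x
      rw [fderiv_const_mul (hφ.differentiable (by simp)).differentiableAt]
      rfl
    have e2 : ∀ x, |r⁻¹ * φ x| ^ q = (r ^ q)⁻¹ * |φ x| ^ q := by
      intro x
      rw [abs_mul, abs_of_pos (by positivity), Real.mul_rpow (by positivity) (abs_nonneg _),
        Real.inv_rpow hr0.le]
    simp only [e1, e2, mul_left_comm (u _), integral_const_mul] at h
    rw [abs_mul, abs_of_pos (by positivity), inv_mul_le_iff₀ hr0, ← hJ] at h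
    have h3 : (r ^ q)⁻¹ * J ≤ 1 := by
      rw [inv_mul_le_iff₀ (by positivity), mul_one]; exact hJr
    calc _ ≤ _ := h
      _ ≤ r * (C * (1 + 1)) := by gcongr
      _ = 2 * C * r := by ring
  refine le_of_forall_pos_le_add fun η hη => ?_
  have h := key (J ^ (1 / q) + η / (2 * C + 1)) (by
    have : 0 < η / (2 * C + 1) := by positivity
    linarith)
  have h2 : 2 * C * (η / (2 * C + 1)) ≤ η := by
    rw [← mul_div_assoc, div_le_iff₀ (by positivity)]
    nlinarith
  linarith

/-! ### Duality on Euclidean space -/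

/-- The space `C_c^∞(ℝ^N)` of test functions. -/
def testSpace (N : ℕ) : Submodule ℝ (Euc N → ℝ) where
  carrier := {φ | ContDiff ℝ (⊤ : ℕ∞) φ ∧ HasCompactSupport φ}
  add_mem' h1 h2 := ⟨h1.1.add h2.1, h1.2.add h2.2⟩
  zero_mem' := ⟨contDiff_const, HasCompactSupport.zero⟩
  smul_mem' c _ h := ⟨contDiff_const.smul h.1, h.2.smul_left (f := fun _ => c)⟩

/-- The Gaussian weights `x ↦ exp(r |x|²)`. -/
noncomputable def gaussWeight (N : ℕ) (r : ℝ) (x : Euc N) : ℝ := Real.exp (r * ‖x‖ ^ 2)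

theorem gaussWeight_pos {N : ℕ} (r : ℝ) (x : Euc N) : 0 < gaussWeight N r x := Real.exp_pos _

theorem gaussWeight_mul {N : ℕ} (r r' : ℝ) (x : Euc N) :
    gaussWeight N r x * gaussWeight N r' x = gaussWeight N (r + r') x := by
  simp only [gaussWeight, ← Real.exp_add, add_mul]

theorem gaussWeight_rpow {N : ℕ} (r t : ℝ) (x : Euc N) :
    gaussWeight N r x ^ t = gaussWeight N (r * t) x := by
  simp only [gaussWeight, ← Real.exp_mul]
  congr 1; ring

theorem gaussWeight_zero {N : ℕ} (x : Euc N) : gaussWeight N 0 x = 1 := by simp [gaussWeight]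

theorem gaussWeight_contDiff {N : ℕ} (r : ℝ) : ContDiff ℝ (⊤ : ℕ∞) (gaussWeight N r) :=
  (contDiff_const.mul (contDiff_norm_sq ℝ)).exp

theorem gaussWeight_integrable (N : ℕ) : Integrable (gaussWeight N (-1)) := by
  have h := (GaussianFourier.integrable_cexp_neg_mul_sq_norm_add (V := Euc N) (b := 1)
    (by simp) 0 0).norm
  refine h.congr (Eventually.of_forall fun x => ?_)
  simp only [Complex.norm_exp, gaussWeight]
  congr 1
  norm_cast
  simp

/-- The finite Gaussian measure. -/
noncomputable def gaussMeasure (N : ℕ) : Measure (Euc N) :=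
  volume.withDensity fun x => ENNReal.ofReal (gaussWeight N (-1) x)

instance (N : ℕ) : IsFiniteMeasure (gaussMeasure N) :=
  isFiniteMeasure_withDensity_ofReal (gaussWeight_integrable N).2

theorem integral_gaussMeasure {N : ℕ} (f : Euc N → ℝ) :
    ∫ x, f x ∂(gaussMeasure N) = ∫ x, gaussWeight N (-1) x * f x := by
  rw [gaussMeasure, integral_withDensity_eq_integral_toReal_smul
    (by have := (gaussWeight_contDiff (N := N) (-1)).continuous; fun_prop) (by simp)]
  simp [ENNReal.toReal_ofReal (gaussWeight_pos _ _).le]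

theorem lintegral_gaussMeasure {N : ℕ} (f : Euc N → ℝ≥0∞) :
    ∫⁻ x, f x ∂(gaussMeasure N) = ∫⁻ x, ENNReal.ofReal (gaussWeight N (-1) x) * f x := by
  rw [gaussMeasure, lintegral_withDensity_eq_lintegral_mul_non_measurable]
  · rfl
  · have := (gaussWeight_contDiff (N := N) (-1)).continuous; fun_prop
  · simp

theorem volume_ac_gaussMeasure (N : ℕ) : (volume : Measure (Euc N)) ≪ gaussMeasure N :=
  withDensity_absolutelyContinuous'
    (by have := (gaussWeight_contDiff (N := N) (-1)).continuous; fun_prop)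
    (Eventually.of_forall fun x => by simpa using gaussWeight_pos (-1) x)

/-- A linear functional on test functions that is bounded for the `L^q` norm is integration
against an `L^p` function. Multiplication by `exp(|x|²/q)` identifies `L^q(ℝ^N)` isometrically
with `L^q` of the Gaussian measure, which reduces the claim to the finite measure case. -/
theorem riesz_test {N : ℕ} {p q : ℝ} (hpq : p.HolderConjugate q) (Λ : testSpace N →ₗ[ℝ] ℝ)
    {C : ℝ} (hΛ : ∀ φ : testSpace N, |Λ φ| ≤ C * (∫ x, |(φ : Euc N → ℝ) x| ^ q) ^ (1 / q)) :
    ∃ h : Euc N → ℝ, MemLp h (ENNReal.ofReal p) volume ∧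
      ∀ φ : testSpace N, Λ φ = ∫ x, h x * (φ : Euc N → ℝ) x := by
  have hp0 : 0 < p := hpq.pos
  have hq0 : 0 < q := hpq.symm.pos
  have hfact : Fact (1 ≤ ENNReal.ofReal q) := ⟨by simpa using hpq.symm.lt.le⟩
  have hinv : 1 / p + 1 / q = 1 := by simpa [one_div] using hpq.inv_add_inv_eq_one
  have hmem : ∀ φ : testSpace N, MemLp (fun x => gaussWeight N (1 / q) x * (φ : Euc N → ℝ) x)
      (ENNReal.ofReal q) (gaussMeasure N) := by
    intro φ
    refine Continuous.memLp_of_hasCompactSupport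
      ((gaussWeight_contDiff _).continuous.mul φ.2.1.continuous) φ.2.2.mul_left
  let e : testSpace N →ₗ[ℝ] Lp ℝ (ENNReal.ofReal q) (gaussMeasure N) :=
    { toFun := fun φ => (hmem φ).toLp _
      map_add' := by
        intro φ ψ
        rw [← MemLp.toLp_add]
        congr 1
        ext x
        simp [mul_add]
      map_smul' := by
        intro c φ
        rw [← MemLp.toLp_const_smul]
        congr 1
        ext x
        simp [mul_left_comm] }
  have he : ∀ φ, e φ = (hmem φ).toLp _ := fun φ => rfl
  have hnorm : ∀ φ : testSpace N, ‖e φ‖ = (∫ x, |(φ : Euc N → ℝ) x| ^ q) ^ (1 / q) := by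
    intro φ
    rw [he, norm_toLp_rpow hq0, integral_gaussMeasure]
    congr 2
    ext x
    rw [abs_mul, Real.mul_rpow (abs_nonneg _) (abs_nonneg _), abs_of_pos (gaussWeight_pos _ _),
      gaussWeight_rpow, ← mul_assoc, gaussWeight_mul, one_div_mul_cancel hq0.ne', neg_add_cancel,
      gaussWeight_zero, one_mul]
  have hdense : DenseRange e := by
    refine (Lp.dense_hasCompactSupport_contDiff (E := Euc N) (F := ℝ) (μ := gaussMeasure N)
      (p := ENNReal.ofReal q) ENNReal.ofReal_ne_top).mono ?_
    rintro f ⟨g, hfg, hgc, hgs⟩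
    refine ⟨⟨fun x => gaussWeight N (-(1 / q)) x * g x,
      (gaussWeight_contDiff _).mul hgs, hgc.mul_left⟩, ?_⟩
    rw [he]
    ext1
    refine (MemLp.coeFn_toLp _).trans (EventuallyEq.trans ?_ hfg.symm)
    refine Eventually.of_forall fun x => ?_
    simp only
    rw [← mul_assoc, gaussWeight_mul, add_neg_cancel, gaussWeight_zero, one_mul]
  have hbd : ∃ C, ∀ φ, ‖Λ φ‖ ≤ C * ‖e φ‖ := ⟨C, fun φ => by rw [hnorm]; exact hΛ φ⟩
  obtain ⟨f, hf, hrep⟩ := dual_finite hpq (Λ.extendOfNorm e)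
  refine ⟨fun x => gaussWeight N (-(1 / p)) x * f x, ⟨?_, ?_⟩, fun φ => ?_⟩
  · exact (gaussWeight_contDiff _).continuous.aestronglyMeasurable.mul
      (hf.1.mono_ac (volume_ac_gaussMeasure N))
  · have h1 := hf.2
    rw [eLpNorm_lt_top_iff_lintegral_rpow_enorm_lt_top (by simpa using hp0)
      ENNReal.ofReal_ne_top, ENNReal.toReal_ofReal hp0.le] at h1 ⊢
    rw [lintegral_gaussMeasure] at h1
    refine lt_of_eq_of_lt (lintegral_congr fun x => ?_) h1
    rw [enorm_mul, ENNReal.mul_rpow_of_nonneg _ _ hp0.le, Real.enorm_of_nonneg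
      (gaussWeight_pos _ _).le, ENNReal.ofReal_rpow_of_pos (gaussWeight_pos _ _),
      gaussWeight_rpow, neg_mul, one_div_mul_cancel hp0.ne']
  · rw [← LinearMap.extendOfNorm_eq hdense hbd φ, hrep]
    have h1 : ∫ x, f x * (e φ) x ∂(gaussMeasure N) =
        ∫ x, f x * (gaussWeight N (1 / q) x * (φ : Euc N → ℝ) x) ∂(gaussMeasure N) := by
      refine integral_congr_ae ?_
      filter_upwards [(hmem φ).coeFn_toLp] with x hx
      rw [he, hx]
    rw [h1, integral_gaussMeasure]
    congr 1
    ext x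
    have h2 : gaussWeight N (-1) x * gaussWeight N (1 / q) x = gaussWeight N (-(1 / p)) x := by
      rw [gaussWeight_mul]; congr 1; linarith
    beta_reduce
    rw [← h2]; ring

/-! ### Conclusion -/

/-- The distributional derivative `φ ↦ ∫ u ∂_e φ` as a linear functional on test functions. -/
noncomputable def weakDeriv {N : ℕ} {u : Euc N → ℝ} (hu : LocallyIntegrable u volume) (e : Euc N) :
    testSpace N →ₗ[ℝ] ℝ where
  toFun φ := ∫ x, u x * fderiv ℝ (φ : Euc N → ℝ) x e
  map_add' φ ψ := by
    have hi : ∀ φ : testSpace N, Integrable fun x => u x * fderiv ℝ (φ : Euc N → ℝ) x e :=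
      fun φ => hu.integrable_smul_right_of_hasCompactSupport
        ((φ.2.1.continuous_fderiv (by simp)).clm_apply continuous_const) (φ.2.2.fderiv_apply ℝ e)
    rw [← integral_add (hi φ) (hi ψ)]
    congr 1
    ext x
    have h1 := (φ.2.1.differentiable (by simp)).differentiableAt (x := x)
    have h2 := (ψ.2.1.differentiable (by simp)).differentiableAt (x := x)
    rw [Submodule.coe_add, fderiv_add h1 h2, add_apply, mul_add]
  map_smul' c φ := by
    rw [RingHom.id_apply, smul_eq_mul, ← integral_const_mul]
    congr 1
    ext x
    have h1 := (φ.2.1.differentiable (by simp)).differentiableAt (x := x)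
    rw [Submodule.coe_smul, fderiv_const_smul h1, smul_apply, smul_eq_mul, mul_left_comm]

/-- The lower bound `G t ≥ c t ^ p` embeds the Orlicz class into `L^p`. -/
theorem HypH.memLp {N : ℕ} {G : ℝ → ℝ} {p : ℝ} (hG : HypH G p) {u : Euc N → ℝ}
    (hum : Measurable u) (huG : PhiG N G u < ⊤) :
    MemLp u (ENNReal.ofReal p) volume := by
  have hp0 : 0 < p := one_pos.trans hG.one_lt
  obtain ⟨c, hc, hlow⟩ := hG.2.2.2
  refine ⟨hum.aestronglyMeasurable, ?_⟩
  rw [eLpNorm_lt_top_iff_lintegral_rpow_enorm_lt_top (by simpa using hp0)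
    ENNReal.ofReal_ne_top, ENNReal.toReal_ofReal hp0.le]
  have hpt : ∀ x, ‖u x‖ₑ ^ p ≤ ENNReal.ofReal c⁻¹ * ENNReal.ofReal (G |u x|) := by
    intro x
    rw [← ofReal_norm, ENNReal.ofReal_rpow_of_nonneg (norm_nonneg _) hp0.le,
      ← ENNReal.ofReal_mul (by positivity), Real.norm_eq_abs]
    refine ENNReal.ofReal_le_ofReal ?_
    rw [← div_eq_inv_mul, le_div_iff₀ hc]
    rcases (abs_nonneg (u x)).eq_or_lt with h | h
    · rw [← h, Real.zero_rpow hp0.ne', zero_mul]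
      exact hG.1.1 0 le_rfl
    · have := hlow _ h
      rw [le_div_iff₀ (by positivity)] at this
      linarith
  refine (lintegral_mono hpt).trans_lt ?_
  rw [lintegral_const_mul' _ _ ENNReal.ofReal_ne_top]
  exact ENNReal.mul_lt_top ENNReal.ofReal_lt_top huG

theorem lintegral_ofReal_norm_rpow_lt_top {N : ℕ} {F : Type*} [NormedAddCommGroup F] {p : ℝ}
    (hp0 : 0 < p) {f : Euc N → F} (hf : MemLp f (ENNReal.ofReal p) volume) :
    ∫⁻ x, ENNReal.ofReal (‖f x‖ ^ p) < ⊤ := by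
  have h := hf.2
  rw [eLpNorm_lt_top_iff_lintegral_rpow_enorm_lt_top (by simpa using hp0)
    ENNReal.ofReal_ne_top, ENNReal.toReal_ofReal hp0.le] at h
  refine lt_of_eq_of_lt (lintegral_congr fun x => ?_) h
  rw [← ofReal_norm, ENNReal.ofReal_rpow_of_nonneg (norm_nonneg _) hp0.le]

/-- **Converse statement** (Theorem 1.5 / `Th2`): if the liminf of the scaled truncated
energies is finite, then `u ∈ W^{1,p}(ℝ^N)`. -/
theorem finiteness_implies_W1p
    (N : ℕ) (hN : 1 ≤ N) (s : ℝ) (hs0 : 0 < s) (hs1 : s < 1)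
    (G : ℝ → ℝ) (p : ℝ) (hG : HypH G p)
    (u : Euc N → ℝ) (hum : Measurable u) (huG : PhiG N G u < ⊤)
    (hliminf : Filter.liminf
        (fun δ : ℝ => ENNReal.ofReal (1 / G (δ ^ (1 - s))) * PsiG N s δ G u)
        (𝓝[>] (0:ℝ)) < ⊤) :
    (∫⁻ x, ENNReal.ofReal (|u x| ^ p)) < ⊤ ∧
    ∃ V : Euc N → Euc N, HasWeakGradient N u V ∧
      (∫⁻ x, ENNReal.ofReal (‖V x‖ ^ p)) < ⊤ := by
  have hp1 := hG.one_lt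
  have hp0 : 0 < p := one_pos.trans hp1
  have hpq : p.HolderConjugate (p.conjExponent) := Real.HolderConjugate.conjExponent hp1
  have hone : 1 ≤ ENNReal.ofReal p := by simpa using hp1.le
  have huLp := hG.memLp hum huG
  have hu : LocallyIntegrable u volume := huLp.locallyIntegrable hone
  refine ⟨by simpa using lintegral_ofReal_norm_rpow_lt_top hp0 huLp, ?_⟩
  obtain ⟨M, hM1, hM2⟩ := exists_between hliminf
  have hfreq := (frequently_lt_of_liminf_lt (by isBoundedDefault) hM1).mono fun _ h => h.le
  have hV : ∀ i : Fin N, ∃ h : Euc N → ℝ, MemLp h (ENNReal.ofReal p) volume ∧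
      ∀ φ : testSpace N, weakDeriv hu (EuclideanSpace.single i 1) φ =
        ∫ x, h x * (φ : Euc N → ℝ) x := by
    intro i
    obtain ⟨C, hC0, hC⟩ := exists_bound hs0 hs1 hG hpq hu hum hM2.ne hfreq i
    exact riesz_test hpq (weakDeriv hu (EuclideanSpace.single i 1)) fun φ =>
      exists_bound_norm hpq.symm.pos hC0 hC φ.2.1 φ.2.2
  choose h hhp hh using hV
  have hVp : MemLp (fun x => WithLp.toLp 2 fun i => -h i x : Euc N → Euc N)
      (ENNReal.ofReal p) volume := MemLp.of_eval_piLp fun i => (hhp i).neg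
  refine ⟨fun x => WithLp.toLp 2 fun i => -h i x, ⟨hu, hVp.locallyIntegrable hone, ?_⟩,
    lintegral_ofReal_norm_rpow_lt_top hp0 hVp⟩
  intro φ hφ hc i
  have h1 := hh i ⟨φ, hφ, hc⟩
  change ∫ x, u x * fderiv ℝ φ x (EuclideanSpace.single i 1) = ∫ x, h i x * φ x at h1
  rw [h1, ← integral_neg]
  simp
end

section
/- Let N ≥ 1, δ > 0, 0 < s < 1, and let G be an Orlicz function. Let ρ ∈ C_c^∞(ℝ^N) with ρ ≥ 0, supp ρ ⊆ B(0,1) and ∫_{ℝ^N} ρ dx = 1, and for r > 0 set ρ_r(x) = r^{−N} ρ(x/r). Then for every u ∈ L^G(ℝ^N) and every r > 0, the mollified function u_r = u ∗ ρ_r satisfies Ψ_{s,G,δ}(u_r) ≤ Ψ_{s,G,δ}(u). -/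
/-!
Let `μ` be the probability measure with density `ρ_r`. Since a convex `G` grows at least linearly,
`L^G` functions are locally integrable and `u_r(x) = ∫ u(x - z) dμ(z)` is an honest integral
(`integrable_translate_of_orlicz`). Jensen's inequality applied to
`z ↦ |u(x - z) - u(y - z)| / |x - y|^s` then bounds the energy density of `u_r` at `(x, y)` by the
`μ`-average over `z` of the energy density of `u` at `(x - z, y - z)` (`energyDensity_average_le`).
The pair `(x - z, y - z)` has the same difference as `(x, y)`, so by Tonelli and translation
invariance of Lebesgue measure, integrating in `(x, y)` gives the energy of `u` for each `z`, and
`μ` has mass one.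
-/


open MeasureTheory Metric Filter Set
open scoped ENNReal RealInnerProductSpace Topology NNReal

/-- The integrand of `PsiG`, cut off to the strip `|x - y| < δ`. -/
noncomputable def energyDensity (N : ℕ) (s δ : ℝ) (G : ℝ → ℝ) (u : Euc N → ℝ) (x y : Euc N) :
    ℝ≥0∞ :=
  (ball x δ).indicator
    (fun y => ENNReal.ofReal (G (|u x - u y| / ‖x - y‖ ^ s) / ‖x - y‖ ^ (N : ℝ))) y

lemma PsiG_eq_lintegral_energyDensity (N : ℕ) (s δ : ℝ) (G : ℝ → ℝ) (u : Euc N → ℝ) :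
    PsiG N s δ G u = ∫⁻ x, ∫⁻ y, energyDensity N s δ G u x y := by
  unfold PsiG energyDensity
  refine lintegral_congr fun x => ?_
  rw [lintegral_indicator measurableSet_ball]

/-- `G` is unconstrained on negative numbers, so only its composition with a nonnegative function
is measurable. -/
lemma measurable_orlicz_comp {α : Type*} [MeasurableSpace α] {G : ℝ → ℝ} (hG : IsOrlicz G)
    {f : α → ℝ} (hf : Measurable f) (hf0 : ∀ a, 0 ≤ f a) : Measurable (fun a => G (f a)) := by
  have hc : Continuous (fun t : ℝ => G (max t 0)) :=
    hG.2.1.comp_continuous (by fun_prop) (fun t => le_max_right t 0)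
  have h := hc.measurable.comp hf
  have e : (fun a => G (f a)) = (fun t : ℝ => G (max t 0)) ∘ f := by
    ext a
    simp [max_eq_left (hf0 a)]
  rw [e]
  exact h

lemma measurable_energyDensity (N : ℕ) (s δ : ℝ) {G : ℝ → ℝ} (hG : IsOrlicz G) {u : Euc N → ℝ}
    (hu : Measurable u) :
    Measurable (fun p : Euc N × Euc N => energyDensity N s δ G u p.1 p.2) := by
  have hS : MeasurableSet {p : Euc N × Euc N | dist p.2 p.1 < δ} :=
    measurableSet_lt (by fun_prop) (by fun_prop)
  have h1 : Measurable (fun p : Euc N × Euc N => G (|u p.1 - u p.2| / ‖p.1 - p.2‖ ^ s)) := by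
    refine measurable_orlicz_comp hG ?_ (fun p => by positivity)
    fun_prop
  have h2 : Measurable (fun p : Euc N × Euc N => ENNReal.ofReal
      (G (|u p.1 - u p.2| / ‖p.1 - p.2‖ ^ s) / ‖p.1 - p.2‖ ^ (N : ℝ))) := by
    refine ENNReal.measurable_ofReal.comp (h1.div ?_)
    fun_prop
  exact h2.indicator hS

/-- Convexity and `G 0 = 0` give `t * G 1 ≤ G t` for `t ≥ 1`. -/
lemma le_one_add_orlicz_div {G : ℝ → ℝ} (hG : IsOrlicz G) {t : ℝ} (ht : 0 ≤ t) :
    t ≤ 1 + G t / G 1 := by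
  obtain ⟨h0, -, hcv, hmono, hz, -⟩ := hG
  have hG1 : 0 < G 1 := by
    have := hmono (a := 0) (b := 1) (by simp) (by simp) one_pos
    rwa [hz] at this
  rcases le_total t 1 with h | h
  · have := div_nonneg (h0 t ht) hG1.le
    linarith
  · have htp : 0 < t := by linarith
    have hb : 0 ≤ t⁻¹ := by positivity
    have ha : 0 ≤ 1 - t⁻¹ := by linarith [inv_le_one_of_one_le₀ h]
    have hc := hcv.2 (mem_Ici.2 le_rfl) (mem_Ici.2 ht) ha hb (by ring)
    simp only [smul_eq_mul, mul_zero, zero_add, hz] at hc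
    rw [inv_mul_cancel₀ htp.ne'] at hc
    have h3 : t ≤ G t / G 1 := by
      rw [le_div_iff₀ hG1]
      calc t * G 1 ≤ t * (t⁻¹ * G t) := by gcongr
        _ = G t := by field_simp
    linarith

/-- Translates (and reflections) of an `L^G` function are integrable against any finite measure
with bounded density. -/
lemma integrable_translate_of_orlicz {N : ℕ} {G : ℝ → ℝ} (hG : IsOrlicz G)
    {u : Euc N → ℝ} (hum : Measurable u) (huG : PhiG N G u < ⊤)
    {w : Euc N → ℝ} (hwm : Measurable w) {C : ℝ} (hwC : ∀ z, w z ≤ C)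
    [IsFiniteMeasure ((volume : Measure (Euc N)).withDensity fun z => ENNReal.ofReal (w z))]
    (x : Euc N) :
    Integrable (fun z => u (x - z))
      ((volume : Measure (Euc N)).withDensity fun z => ENNReal.ofReal (w z)) := by
  set μ := (volume : Measure (Euc N)).withDensity fun z => ENNReal.ofReal (w z) with hμ
  have hle : μ ≤ ENNReal.ofReal C • (volume : Measure (Euc N)) := by
    rw [← withDensity_const]
    exact withDensity_mono (ae_of_all _ fun z => ENNReal.ofReal_le_ofReal (hwC z))
  have hGm : Measurable (fun z => G |u z|) :=
    measurable_orlicz_comp hG (by fun_prop) (fun z => abs_nonneg _)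
  have hGi : Integrable (fun z => G |u z|) (volume : Measure (Euc N)) := by
    refine ⟨hGm.aestronglyMeasurable, ?_⟩
    rw [hasFiniteIntegral_iff_ofReal (ae_of_all _ fun z => hG.1 _ (abs_nonneg _))]
    exact huG
  have hGx : Integrable (fun z => G |u (x - z)|) μ :=
    ((hGi.comp_sub_left x).smul_measure ENNReal.ofReal_ne_top).mono_measure hle
  refine ((integrable_const (1 : ℝ)).add (hGx.div_const (G 1))).mono'
    (hum.comp (by fun_prop)).aestronglyMeasurable (ae_of_all _ fun z => ?_)
  exact le_one_add_orlicz_div hG (abs_nonneg _)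

/-- Jensen's inequality in `[0, ∞]`: if `G ∘ h` is not integrable, the right side is `∞`. -/
lemma orlicz_jensen {α : Type*} [MeasurableSpace α] {μ : Measure α} [IsProbabilityMeasure μ]
    {G : ℝ → ℝ} (hG : IsOrlicz G) {h : α → ℝ} (hm : Measurable h) (h0 : ∀ a, 0 ≤ h a)
    (hi : Integrable h μ) :
    ENNReal.ofReal (G (∫ a, h a ∂μ)) ≤ ∫⁻ a, ENNReal.ofReal (G (h a)) ∂μ := by
  have hGm := measurable_orlicz_comp hG hm h0
  have hnn : 0 ≤ᵐ[μ] fun a => G (h a) := ae_of_all _ fun a => hG.1 _ (h0 a)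
  by_cases hGi : Integrable (fun a => G (h a)) μ
  · rw [← ofReal_integral_eq_lintegral_ofReal hGi hnn]
    exact ENNReal.ofReal_le_ofReal
      (hG.2.2.1.map_integral_le hG.2.1 isClosed_Ici (ae_of_all _ h0) hi hGi)
  · have : ∫⁻ a, ENNReal.ofReal (G (h a)) ∂μ = ⊤ := by
      by_contra hne
      exact hGi ⟨hGm.aestronglyMeasurable,
        (hasFiniteIntegral_iff_ofReal hnn).2 (lt_top_iff_ne_top.2 hne)⟩
    rw [this]
    exact le_top

lemma energyDensity_average_le {N : ℕ} (s δ : ℝ) {G : ℝ → ℝ} (hG : IsOrlicz G)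
    {u : Euc N → ℝ} (hum : Measurable u) (μ : Measure (Euc N)) [IsProbabilityMeasure μ]
    (hi : ∀ x, Integrable (fun z => u (x - z)) μ) (x y : Euc N) :
    energyDensity N s δ G (fun x => ∫ z, u (x - z) ∂μ) x y
      ≤ ∫⁻ z, energyDensity N s δ G u (x - z) (y - z) ∂μ := by
  by_cases hxy : y ∈ ball x δ
  · have hz : ∀ z, y - z ∈ ball (x - z) δ := fun z => by
      simpa [mem_ball, dist_sub_right] using hxy
    simp only [energyDensity, indicator_of_mem hxy, indicator_of_mem (hz _),
      sub_sub_sub_cancel_right]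
    set c := ‖x - y‖ ^ s with hc
    set D := ‖x - y‖ ^ (N : ℝ) with hD
    have hc0 : 0 ≤ c := by positivity
    have hD0 : 0 ≤ D := by positivity
    have hdi : Integrable (fun z => |u (x - z) - u (y - z)| / c) μ :=
      ((hi x).sub (hi y)).abs.div_const c
    have hle : |∫ z, u (x - z) ∂μ - ∫ z, u (y - z) ∂μ| / c
        ≤ ∫ z, |u (x - z) - u (y - z)| / c ∂μ := by
      rw [integral_div, ← integral_sub (hi x) (hi y)]
      gcongr
      exact abs_integral_le_integral_abs
    have hGle := hG.2.2.2.1.monotoneOn (mem_Ici.2 (by positivity))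
      (mem_Ici.2 (le_trans (by positivity) hle)) hle
    have hdm : Measurable (fun z => |u (x - z) - u (y - z)| / c) := by fun_prop
    have hJ := orlicz_jensen hG hdm (fun z => by positivity) hdi
    have hsplit : ∀ a, 0 ≤ a → ENNReal.ofReal (G a / D)
        = ENNReal.ofReal (G a) * ENNReal.ofReal D⁻¹ := fun a ha => by
      rw [div_eq_mul_inv, ENNReal.ofReal_mul (hG.1 a ha)]
    rw [hsplit _ (by positivity)]
    simp_rw [fun z => hsplit (|u (x - z) - u (y - z)| / c) (by positivity)]
    rw [lintegral_mul_const' _ _ ENNReal.ofReal_ne_top]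
    gcongr
    exact (ENNReal.ofReal_le_ofReal hGle).trans hJ
  · simp [energyDensity, indicator_of_notMem hxy]

lemma PsiG_average_le {N : ℕ} (s δ : ℝ) {G : ℝ → ℝ} (hG : IsOrlicz G)
    {u : Euc N → ℝ} (hum : Measurable u) (μ : Measure (Euc N)) [IsProbabilityMeasure μ]
    (hi : ∀ x, Integrable (fun z => u (x - z)) μ) :
    PsiG N s δ G (fun x => ∫ z, u (x - z) ∂μ) ≤ PsiG N s δ G u := by
  have hk := measurable_energyDensity N s δ hG hum
  simp only [PsiG_eq_lintegral_energyDensity]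
  calc ∫⁻ x, ∫⁻ y, energyDensity N s δ G (fun x => ∫ z, u (x - z) ∂μ) x y
      ≤ ∫⁻ x, ∫⁻ y, ∫⁻ z, energyDensity N s δ G u (x - z) (y - z) ∂μ :=
        lintegral_mono fun x => lintegral_mono fun y =>
          energyDensity_average_le s δ hG hum μ hi x y
    _ = ∫⁻ x, ∫⁻ z, ∫⁻ y, energyDensity N s δ G u (x - z) (y - z) ∂volume ∂μ := by
        refine lintegral_congr fun x => lintegral_lintegral_swap ?_
        exact (hk.comp (f := fun p : Euc N × Euc N => (x - p.2, p.1 - p.2))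
          (by fun_prop)).aemeasurable
    _ = ∫⁻ x, ∫⁻ z, ∫⁻ y, energyDensity N s δ G u (x - z) y ∂volume ∂μ := by
        refine lintegral_congr fun x => lintegral_congr fun z => ?_
        exact lintegral_sub_right_eq_self (fun y => energyDensity N s δ G u (x - z) y) z
    _ = ∫⁻ z, ∫⁻ x, ∫⁻ y, energyDensity N s δ G u (x - z) y ∂volume ∂volume ∂μ := by
        refine lintegral_lintegral_swap ?_
        exact (hk.lintegral_prod_right'.comp (f := fun p : Euc N × Euc N => p.1 - p.2)
          (by fun_prop)).aemeasurable
    _ = ∫⁻ _z, ∫⁻ x, ∫⁻ y, energyDensity N s δ G u x y ∂volume ∂volume ∂μ := by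
        refine lintegral_congr fun z => ?_
        exact lintegral_sub_right_eq_self (fun x => ∫⁻ y, energyDensity N s δ G u x y) z
    _ = ∫⁻ x, ∫⁻ y, energyDensity N s δ G u x y := by simp

/-- **Mollification decreases the truncated energy** (Lemma 2.13 / `lem:mollifier`):
`Ψ_{s,G,δ}(u ∗ ρ_r) ≤ Ψ_{s,G,δ}(u)`. -/
theorem mollified_energy_le
    (N : ℕ) (hN : 1 ≤ N) (δ : ℝ) (hδ : 0 < δ) (s : ℝ) (hs0 : 0 < s) (hs1 : s < 1)
    (G : ℝ → ℝ) (hG : IsOrlicz G)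
    (ρ : Euc N → ℝ) (hρsm : ContDiff ℝ (⊤ : ℕ∞) ρ) (hρc : HasCompactSupport ρ)
    (hρ0 : ∀ x, 0 ≤ ρ x) (hρsupp : Function.support ρ ⊆ ball (0 : Euc N) 1)
    (hρ1 : ∫ x, ρ x = 1)
    (u : Euc N → ℝ) (hum : Measurable u) (huG : PhiG N G u < ⊤)
    (r : ℝ) (hr : 0 < r) :
    PsiG N s δ G (fun x => ∫ z, u (x - z) * (r ^ (-(N:ℝ)) * ρ (r⁻¹ • z)))
      ≤ PsiG N s δ G u := by
  set w : Euc N → ℝ := fun z => r ^ (-(N:ℝ)) * ρ (r⁻¹ • z) with hw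
  have hρcont : Continuous ρ := hρsm.continuous
  have hwcont : Continuous w := by fun_prop
  have hw0 : ∀ z, 0 ≤ w z := fun z => mul_nonneg (by positivity) (hρ0 _)
  obtain ⟨C, hC⟩ := hρc.exists_bound_of_continuous hρcont
  have hwC : ∀ z, w z ≤ r ^ (-(N:ℝ)) * C := fun z => by
    have := (le_abs_self _).trans (hC (r⁻¹ • z))
    exact mul_le_mul_of_nonneg_left this (by positivity)
  have hw1 : ∫ z, w z = 1 := by
    rw [hw, integral_const_mul, Measure.integral_comp_inv_smul, hρ1]
    simp only [finrank_euclideanSpace, Fintype.card_fin, smul_eq_mul, mul_one]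
    rw [abs_of_pos (by positivity), Real.rpow_neg hr.le, Real.rpow_natCast]
    exact inv_mul_cancel₀ (by positivity)
  have hwi : Integrable w := by
    by_contra h
    rw [integral_undef h] at hw1
    exact zero_ne_one hw1
  set μ := (volume : Measure (Euc N)).withDensity fun z => ENNReal.ofReal (w z) with hμ
  have hprob : IsProbabilityMeasure μ := ⟨by
    rw [hμ, withDensity_apply _ MeasurableSet.univ, Measure.restrict_univ,
      ← ofReal_integral_eq_lintegral_ofReal hwi (ae_of_all _ hw0), hw1, ENNReal.ofReal_one]⟩
  have hconv : (fun x => ∫ z, u (x - z) * w z) = fun x => ∫ z, u (x - z) ∂μ := by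
    ext x
    rw [hμ, integral_withDensity_eq_integral_toReal_smul
      (by fun_prop) (ae_of_all _ fun z => ENNReal.ofReal_lt_top)]
    refine integral_congr_ae (ae_of_all _ fun z => ?_)
    simp [ENNReal.toReal_ofReal (hw0 z), mul_comm]
  rw [hconv]
  exact PsiG_average_le s δ hG hum μ fun x =>
    integrable_translate_of_orlicz hG hum huG hwcont.measurable hwC x
end

section
/- Let N ≥ 1, 0 < δ ≤ 1, 0 < s < 1, let G be an Orlicz function with Δ₂ constant 𝔠, and let k ≥ 1 be an integer. Let η_k : ℝ^N → ℝ be a smooth function with 0 ≤ η_k ≤ 1, η_k ≡ 1 on B(0,k), supp η_k ⊆ B(0,2k) and |∇η_k| ≤ 2/k everywhere. Then for every u ∈ L^G(ℝ^N), Ψ_{s,G,δ}(η_k u) ≤ (𝔠/2) Ψ_{s,G,δ}(u) + [N ω_N 𝔠² / (2k(1−s))] Φ_G(δ^{1−s} u), where ω_N = σ(𝕊^{N−1}) is the surface area of the unit sphere in ℝ^N. -/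
/-!
The estimate rests on the splitting
`η(x)u(x) - η(y)u(y) = η(y)(u(x) - u(y)) + u(x)(η(x) - η(y))`.
Convexity and the Δ₂ condition give `G(a + b) ≤ (c/2)(G a + G b)` (`orlicz_add_le`), so the first
summand contributes at most `(c/2) Ψ(u)` because `0 ≤ η ≤ 1` and `G` is increasing.

For the second summand, put `r = |x - y| < δ` and `θ = (r/δ)^(1-s) ∈ [0,1]`. Since `η` is
`2/k`-Lipschitz, its argument is at most `(2/k) r^(1-s) |u(x)| = (θ/k) · 2 · δ^(1-s)|u(x)|`.
As `θ/k ≤ 1`, convexity with `G 0 = 0` (`orlicz_mul_le`) and Δ₂ bound its `G`-value by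
`(cθ/k) G(δ^(1-s)|u(x)|)`. The remaining kernel `r^(1-s-N)` integrates over `B(x,δ)`, in polar
coordinates, to `ω_N δ^(1-s)/(1-s)` (`lintegral_ball_rpow`). This gives the constant
`c² ω_N / (2k(1-s))`, which the factor `N ≥ 1` only enlarges.
-/

open MeasureTheory Metric Filter Set
open scoped ENNReal RealInnerProductSpace Topology NNReal

/-- The kernel of the truncated energy, integrated in polar coordinates. -/
lemma lintegral_ball_rpow (N : ℕ) (hN : 1 ≤ N) (δ s : ℝ) (hδ0 : 0 < δ) (hs1 : s < 1)
    (x : Euc N) :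
    ∫⁻ y in ball x δ, ENNReal.ofReal (‖x - y‖ ^ (1 - s - N)) =
      ENNReal.ofReal (sphereArea N * (δ ^ (1 - s) / (1 - s))) := by
  have : NeZero N := ⟨by omega⟩
  have hfin : Module.finrank ℝ (Euc N) = N := by simp
  set f : ℝ → ℝ := (Iio δ).indicator (fun r => r ^ (1 - s - N)) with hf
  have hf0 : ∀ z : Euc N, 0 ≤ f ‖z‖ := fun z =>
    indicator_apply_nonneg fun _ => Real.rpow_nonneg (norm_nonneg z) _
  -- After absorbing the Jacobian `r^(N-1)`, the radial integrand is `r^(-s)` on `(0,δ)`.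
  have hrad : ∀ r ∈ Ioi (0:ℝ), r ^ (Module.finrank ℝ (Euc N) - 1) • f r =
      (Iio δ).indicator (fun r : ℝ => r ^ (-s)) r := by
    intro r hr
    have hr : 0 < r := hr
    by_cases h : r < δ
    · simp only [hf, hfin, indicator_of_mem (mem_Iio.2 h), smul_eq_mul]
      rw [← Real.rpow_natCast, ← Real.rpow_add hr, Nat.cast_sub hN]
      congr 1
      push_cast
      ring
    · simp [hf, h]
  have hIoo : Ioi (0:ℝ) ∩ Iio δ = Ioo 0 δ := rfl
  have hint : Integrable (fun z : Euc N => f ‖z‖) volume := by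
    rw [integrable_fun_norm_addHaar, integrableOn_congr_fun hrad measurableSet_Ioi,
      IntegrableOn, integrable_indicator_iff measurableSet_Iio, IntegrableOn,
      Measure.restrict_restrict measurableSet_Iio, inter_comm, hIoo]
    exact ((intervalIntegral.integrableOn_Ioo_rpow_iff hδ0).2 (by linarith))
  have hval : ∫ z : Euc N, f ‖z‖ = sphereArea N * (δ ^ (1 - s) / (1 - s)) := by
    rw [integral_fun_norm_addHaar, setIntegral_congr_fun measurableSet_Ioi hrad,
      setIntegral_indicator measurableSet_Iio, hIoo, ← integral_Ioc_eq_integral_Ioo,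
      ← intervalIntegral.integral_of_le hδ0.le, integral_rpow (Or.inl (by linarith)),
      Real.zero_rpow (by linarith), sphereArea, ← Measure.real,
      Measure.toSphere_real_apply_univ, neg_add_eq_sub]
    simp [mul_assoc]
  calc _ = ∫⁻ y, ENNReal.ofReal (f ‖x - y‖) := by
        rw [← lintegral_indicator measurableSet_ball]
        refine lintegral_congr fun y => ?_
        by_cases h : ‖x - y‖ < δ
        · have : y ∈ ball x δ := by rwa [mem_ball, dist_comm, dist_eq_norm]
          simp [hf, h, this]
        · have : y ∉ ball x δ := by rwa [mem_ball, dist_comm, dist_eq_norm]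
          simp [hf, h, this]
    _ = ∫⁻ z : Euc N, ENNReal.ofReal (f ‖z‖) :=
        lintegral_sub_left_eq_self (fun z : Euc N => ENNReal.ofReal (f ‖z‖)) x
    _ = _ := by
        rw [← ofReal_integral_eq_lintegral_ofReal hint (Eventually.of_forall hf0), hval]

lemma orlicz_mul_le {G : ℝ → ℝ} (hG : IsOrlicz G) {θ t : ℝ} (h0 : 0 ≤ θ) (h1 : θ ≤ 1)
    (ht : 0 ≤ t) : G (θ * t) ≤ θ * G t := by
  obtain ⟨-, -, hconv, -, hG0, -⟩ := hG
  have := hconv.2 (mem_Ici.2 ht) (mem_Ici.2 le_rfl) h0 (sub_nonneg.2 h1) (by ring)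
  simpa [hG0] using this

lemma orlicz_add_le {G : ℝ → ℝ} (hG : IsOrlicz G) {c : ℝ}
    (hΔ₂ : ∀ t ≥ (0:ℝ), G (2 * t) ≤ c * G t) {a b : ℝ} (ha : 0 ≤ a) (hb : 0 ≤ b) :
    G (a + b) ≤ c / 2 * (G a + G b) := by
  have hconv := hG.2.2.1
  have h2a : 2 * a ∈ Ici (0:ℝ) := mem_Ici.2 (by positivity)
  have h2b : 2 * b ∈ Ici (0:ℝ) := mem_Ici.2 (by positivity)
  have half : (0:ℝ) ≤ 1 / 2 := by norm_num
  have := hconv.2 h2a h2b half half (by norm_num)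
  have e : (1 / 2 : ℝ) • (2 * a) + (1 / 2 : ℝ) • (2 * b) = a + b := by
    simp only [smul_eq_mul]; ring
  rw [e] at this
  simp only [smul_eq_mul] at this
  linarith [hΔ₂ a ha, hΔ₂ b hb]

/-- The pointwise bound of the energy density of `ηu` at distance `r = |x - y| > 0`, with
`e`, `e₂` the values of `η` and `a`, `b` those of `u` at `x` and `y`. -/
lemma orlicz_pointwise {G : ℝ → ℝ} (hG : IsOrlicz G) {c : ℝ} (hc : 2 < c)
    (hΔ₂ : ∀ t ≥ (0:ℝ), G (2 * t) ≤ c * G t) {δ s r K : ℝ} (hs1 : s < 1)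
    (hr : 0 < r) (hrδ : r ≤ δ) (hK : 1 ≤ K) {e e₂ a b : ℝ} (he0 : 0 ≤ e₂) (he1 : e₂ ≤ 1)
    (hlip : |e - e₂| ≤ 2 / K * r) :
    G (|e * a - e₂ * b| / r ^ s) ≤ c / 2 * G (|a - b| / r ^ s) +
      c ^ 2 / (2 * K) * (r ^ (1 - s) / δ ^ (1 - s)) * G (δ ^ (1 - s) * |a|) := by
  have hmono := hG.2.2.2.1.monotoneOn
  have hnn := hG.1
  have hδ : 0 < δ := hr.trans_le hrδ
  have hrs : 0 < r ^ s := Real.rpow_pos_of_pos hr s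
  have hδs : 0 < δ ^ (1 - s) := Real.rpow_pos_of_pos hδ _
  have hrs' : 0 < r ^ (1 - s) := Real.rpow_pos_of_pos hr _
  have hrr : r = r ^ (1 - s) * r ^ s := by
    rw [← Real.rpow_add hr]; simp
  set θ := r ^ (1 - s) / δ ^ (1 - s) with hθ
  have hθ0 : 0 ≤ θ := by positivity
  have hθ1 : θ ≤ 1 := by
    rw [hθ, div_le_one hδs]
    exact Real.rpow_le_rpow hr.le hrδ (by linarith)
  have hθK : θ / K ≤ 1 := by
    rw [div_le_one (by linarith)]; linarith
  set t := δ ^ (1 - s) * |a| with ht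
  have ht0 : 0 ≤ t := by positivity
  have hA : 0 ≤ |a - b| / r ^ s := by positivity
  have hB : 0 ≤ θ / K * (2 * t) := by positivity
  have hsplit : |e * a - e₂ * b| / r ^ s ≤ |a - b| / r ^ s + θ / K * (2 * t) := by
    have h1 : |e * a - e₂ * b| ≤ |a - b| + 2 / K * r * |a| := by
      calc |e * a - e₂ * b| = |e₂ * (a - b) + (e - e₂) * a| := by congr 1; ring
        _ ≤ |e₂ * (a - b)| + |(e - e₂) * a| := abs_add_le _ _
        _ = e₂ * |a - b| + |e - e₂| * |a| := by rw [abs_mul, abs_mul, abs_of_nonneg he0]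
        _ ≤ 1 * |a - b| + 2 / K * r * |a| := by gcongr
        _ = _ := by rw [one_mul]
    have h2 : 2 / K * r * |a| / r ^ s = θ / K * (2 * t) := by
      rw [hθ, ht]
      nth_rewrite 1 [hrr]
      field_simp
    calc _ ≤ (|a - b| + 2 / K * r * |a|) / r ^ s := by gcongr
      _ = _ := by rw [add_div, h2]
  have h2 : G (θ / K * (2 * t)) ≤ θ / K * (c * G t) :=
    (orlicz_mul_le hG (by positivity) hθK (by positivity)).trans
      (mul_le_mul_of_nonneg_left (hΔ₂ t ht0) (by positivity))
  calc _ ≤ G (|a - b| / r ^ s + θ / K * (2 * t)) :=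
        hmono (mem_Ici.2 (by positivity)) (mem_Ici.2 (by positivity)) hsplit
    _ ≤ c / 2 * (G (|a - b| / r ^ s) + G (θ / K * (2 * t))) := orlicz_add_le hG hΔ₂ hA hB
    _ ≤ c / 2 * (G (|a - b| / r ^ s) + θ / K * (c * G t)) := by gcongr
    _ = _ := by field_simp

/-- **Truncation estimate** (Lemma 2.14):
`Ψ_{s,G,δ}(η_k u) ≤ (𝔠/2) Ψ_{s,G,δ}(u) + [N ω_N 𝔠²/(2k(1-s))] Φ_G(δ^{1-s} u)`. -/
theorem truncation_estimate
    (N : ℕ) (hN : 1 ≤ N) (δ : ℝ) (hδ0 : 0 < δ) (hδ1 : δ ≤ 1)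
    (s : ℝ) (hs0 : 0 < s) (hs1 : s < 1)
    (G : ℝ → ℝ) (hG : IsOrlicz G)
    (c : ℝ) (hc : 2 < c) (hΔ₂ : ∀ t ≥ (0:ℝ), G (2 * t) ≤ c * G t)
    (k : ℕ) (hk : 1 ≤ k)
    (η : Euc N → ℝ) (hηsm : ContDiff ℝ (⊤ : ℕ∞) η)
    (hη01 : ∀ x, 0 ≤ η x ∧ η x ≤ 1)
    (hη1 : ∀ x ∈ ball (0 : Euc N) (k : ℝ), η x = 1)
    (hηsupp : Function.support η ⊆ ball (0 : Euc N) (2 * (k : ℝ)))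
    (hηgrad : ∀ x, ‖fderiv ℝ η x‖ ≤ 2 / (k : ℝ))
    (u : Euc N → ℝ) (hum : Measurable u) (huG : PhiG N G u < ⊤) :
    PsiG N s δ G (fun x => η x * u x) ≤
      ENNReal.ofReal (c / 2) * PsiG N s δ G u +
        ENNReal.ofReal ((N : ℝ) * sphereArea N * c ^ 2 / (2 * (k : ℝ) * (1 - s))) *
          ∫⁻ x, ENNReal.ofReal (G (δ ^ (1 - s) * |u x|)) := by
  have hk' : (1:ℝ) ≤ k := by exact_mod_cast hk
  have hN' : (1:ℝ) ≤ N := by exact_mod_cast hN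
  have hδs : 0 < δ ^ (1 - s) := Real.rpow_pos_of_pos hδ0 _
  have hlip : ∀ x y, |η x - η y| ≤ 2 / (k:ℝ) * ‖x - y‖ := fun x y => by
    simpa using convex_univ.norm_image_sub_le_of_norm_fderiv_le (𝕜 := ℝ) (f := η)
      (fun z _ => hηsm.differentiable (by simp) z) (fun z _ => hηgrad z)
      (mem_univ y) (mem_univ x)
  have hG0 : G 0 = 0 := hG.2.2.2.2.1
  have hnn := hG.1
  set M : Euc N → ℝ := fun x => G (δ ^ (1 - s) * |u x|) with hM
  have hM0 : ∀ x, 0 ≤ M x := fun x => hnn _ (by positivity)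
  have hMmeas : Measurable M := by
    -- `G` is only known to be continuous on `[0,∞)`, where all its arguments lie.
    have hcont : Continuous fun t : ℝ => G (max t 0) :=
      hG.2.1.comp_continuous (by fun_prop) fun t => mem_Ici.2 (le_max_right _ _)
    have : M = (fun t : ℝ => G (max t 0)) ∘ fun x => δ ^ (1 - s) * |u x| := by
      funext x
      simp only [hM, Function.comp]
      rw [max_eq_left (by positivity)]
    rw [this]
    exact hcont.measurable.comp (measurable_const.mul hum.abs)
  set C : ℝ := c ^ 2 / (2 * (k:ℝ)) / δ ^ (1 - s) with hC
  have hC0 : 0 ≤ C := by positivity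
  have hpt : ∀ x, ∀ y ∈ ball x δ,
      ENNReal.ofReal (G (|η x * u x - η y * u y| / ‖x - y‖ ^ s) / ‖x - y‖ ^ (N:ℝ)) ≤
      ENNReal.ofReal (c / 2) *
        ENNReal.ofReal (G (|u x - u y| / ‖x - y‖ ^ s) / ‖x - y‖ ^ (N:ℝ)) +
      ENNReal.ofReal (C * M x) * ENNReal.ofReal (‖x - y‖ ^ (1 - s - N)) := by
    intro x y hy
    rcases eq_or_ne x y with rfl | hxy
    · simp [hG0]
    have hr : 0 < ‖x - y‖ := norm_pos_iff.2 (sub_ne_zero.2 hxy)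
    have hrδ : ‖x - y‖ ≤ δ := by
      rw [mem_ball, dist_comm, dist_eq_norm] at hy; exact hy.le
    have hrN : 0 < ‖x - y‖ ^ (N:ℝ) := Real.rpow_pos_of_pos hr _
    have hA : 0 ≤ G (|u x - u y| / ‖x - y‖ ^ s) := hnn _ (by positivity)
    have hMx := hM0 x
    rw [← ENNReal.ofReal_mul (by positivity), ← ENNReal.ofReal_mul (by positivity),
      ← ENNReal.ofReal_add (by positivity) (by positivity)]
    refine ENNReal.ofReal_le_ofReal ?_
    have := orlicz_pointwise hG hc hΔ₂ hs1 hr hrδ hk' (e := η x) (a := u x) (b := u y)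
      (hη01 y).1 (hη01 y).2 (hlip x y)
    calc _ ≤ (_ : ℝ) / ‖x - y‖ ^ (N:ℝ) := div_le_div_of_nonneg_right this hrN.le
      _ = _ := by
        rw [Real.rpow_sub hr (1 - s) N, hC]
        simp only [hM]
        field_simp
  have hinner : ∀ x, ∫⁻ y in ball x δ,
      ENNReal.ofReal (G (|η x * u x - η y * u y| / ‖x - y‖ ^ s) / ‖x - y‖ ^ (N:ℝ)) ≤
      ENNReal.ofReal (c / 2) * (∫⁻ y in ball x δ,
        ENNReal.ofReal (G (|u x - u y| / ‖x - y‖ ^ s) / ‖x - y‖ ^ (N:ℝ))) +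
      ENNReal.ofReal (sphereArea N * c ^ 2 / (2 * (k:ℝ) * (1 - s))) *
        ENNReal.ofReal (M x) := by
    intro x
    refine (setLIntegral_mono' measurableSet_ball (hpt x)).trans ?_
    rw [lintegral_add_right _ (by fun_prop), lintegral_const_mul' _ _ ENNReal.ofReal_ne_top,
      lintegral_const_mul' _ _ ENNReal.ofReal_ne_top,
      lintegral_ball_rpow N hN δ s hδ0 hs1 x]
    refine add_le_add le_rfl (le_of_eq ?_)
    have hMx := hM0 x
    rw [← ENNReal.ofReal_mul (by positivity), ← ENNReal.ofReal_mul' hMx]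
    congr 1
    have : 1 - s ≠ 0 := by linarith
    rw [hC]
    field_simp
  have hS : 0 ≤ sphereArea N := ENNReal.toReal_nonneg
  have hs' : 0 < 1 - s := by linarith
  calc PsiG N s δ G (fun x => η x * u x)
      ≤ ∫⁻ x, (ENNReal.ofReal (c / 2) * (∫⁻ y in ball x δ,
          ENNReal.ofReal (G (|u x - u y| / ‖x - y‖ ^ s) / ‖x - y‖ ^ (N:ℝ))) +
        ENNReal.ofReal (sphereArea N * c ^ 2 / (2 * (k:ℝ) * (1 - s))) *
          ENNReal.ofReal (M x)) := lintegral_mono hinner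
    _ = ENNReal.ofReal (c / 2) * PsiG N s δ G u +
        ENNReal.ofReal (sphereArea N * c ^ 2 / (2 * (k:ℝ) * (1 - s))) *
          ∫⁻ x, ENNReal.ofReal (M x) := by
        rw [lintegral_add_right _ (by fun_prop), lintegral_const_mul' _ _ ENNReal.ofReal_ne_top,
          lintegral_const_mul' _ _ ENNReal.ofReal_ne_top, PsiG]
    _ ≤ _ := by
        gcongr
        exact le_mul_of_one_le_left hS hN'
end

section
/- Let N ≥ 1, 0 < s < 1, and let G be an Orlicz function satisfying hypotheses (H) with index p. Let u ∈ C_c²(ℝ^N) (twice continuously differentiable with compact support). Then for every x ∈ ℝ^N, lim_{δ→0⁺} [p(1−s)/G(δ^{1−s})] ∫_{B(x,δ)} G(|u(x)−u(y)|/|x−y|^s) |x−y|^{−N} dy = K_{N,p} |∇u(x)|^p. -/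
/-!
Substituting `y = x + δ z` and writing `T = δ ^ (1 - s)`, the left-hand side becomes
`p (1 - s) ∫_{B(0,1)} (G (T a_δ(z)) / G T) ‖z‖ ^ (-N) dz`, where
`a_δ(z) = (|u (x + δ z) - u x| / δ) / ‖z‖ ^ s` tends to `|⟪∇u x, z⟫| / ‖z‖ ^ s` as `δ → 0⁺`.

The limit passes under the integral by dominated convergence. Pointwise, regular variation and
monotonicity of `G` give `G (T a_δ(z)) / G T → (|⟪∇u x, z⟫| / ‖z‖ ^ s) ^ p` (`regVary_tendsto`).
For the domination, `u` is Lipschitz, so `a_δ(z) ≤ M ‖z‖ ^ (1 - s)`; convexity with `G 0 = 0` then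
gives `G (T a_δ(z)) / G T ≤ ‖z‖ ^ (1 - s) G (M T) / G T`, the last quotient is eventually at most
`M ^ p + 1`, and `‖z‖ ^ (1 - s - N)` is integrable on the unit ball.

The limit integral is invariant under replacing `∇u x` by any vector of the same norm
(`lintegral_limit_rotate`), in particular by `‖∇u x‖ • e`, and for that vector polar coordinates
evaluate it (`lintegral_limit_polar`).
-/

open MeasureTheory Metric Filter Set
open scoped ENNReal RealInnerProductSpace Topology NNReal

/-- Polar coordinates on the unit ball, for the surface measure `Measure.toSphere`. -/
lemma lintegral_ball_polar (N : ℕ) (hN : 1 ≤ N) (f : Euc N → ℝ≥0∞) (hf : Measurable f) :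
    ∫⁻ z in ball (0 : Euc N) 1, f z =
      ∫⁻ w : sphere (0 : Euc N) 1, (∫⁻ r in Ioo (0 : ℝ) 1,
        ENNReal.ofReal (r ^ (N - 1)) * f (r • (w : Euc N)))
        ∂((volume : Measure (Euc N)).toSphere) := by
  have : Nonempty (Fin N) := ⟨⟨0, hN⟩⟩
  set g : Euc N → ℝ≥0∞ := (ball (0 : Euc N) 1).indicator f with hg
  have hgm : Measurable g := hf.indicator measurableSet_ball
  have hmp := (volume : Measure (Euc N)).measurePreserving_homeomorphUnitSphereProd
  have hcont : Measurable (fun q : sphere (0 : Euc N) 1 × Ioi (0 : ℝ) =>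
      (q.2 : ℝ) • (q.1 : Euc N)) := by fun_prop
  calc ∫⁻ z in ball (0 : Euc N) 1, f z = ∫⁻ z, g z :=
        (lintegral_indicator measurableSet_ball f).symm
    _ = ∫⁻ z in ({0}ᶜ : Set (Euc N)), g z := by rw [restrict_compl_singleton]
    _ = ∫⁻ z : ({0}ᶜ : Set (Euc N)), g z ∂(volume.comap Subtype.val) :=
        (lintegral_subtype_comap (measurableSet_singleton _).compl g).symm
    _ = ∫⁻ q, g ((q.2 : ℝ) • (q.1 : Euc N))
          ∂((volume : Measure (Euc N)).toSphere.prod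
            (Measure.volumeIoiPow (Module.finrank ℝ (Euc N) - 1))) := by
        rw [← hmp.lintegral_comp_emb (Homeomorph.measurableEmbedding _)]
        refine lintegral_congr fun z => ?_
        congr 1
        have hz : ‖(z : Euc N)‖ ≠ 0 := norm_ne_zero_iff.2 z.2
        simp [smul_smul, hz]
    _ = _ := by
        rw [lintegral_prod (fun q : sphere (0 : Euc N) 1 × Ioi (0 : ℝ) =>
          g ((q.2 : ℝ) • (q.1 : Euc N))) (hgm.comp hcont).aemeasurable]
        refine lintegral_congr fun w => ?_
        have hw : ‖(w : Euc N)‖ = 1 := by simp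
        rw [Measure.volumeIoiPow, lintegral_withDensity_eq_lintegral_mul _ (by fun_prop)
          (by exact hgm.comp (by fun_prop))]
        simp only [Pi.mul_apply]
        rw [lintegral_subtype_comap measurableSet_Ioi
          (fun r : ℝ => ENNReal.ofReal (r ^ (Module.finrank ℝ (Euc N) - 1)) *
            g (r • (w : Euc N))), ← lintegral_indicator measurableSet_Ioi,
          ← lintegral_indicator measurableSet_Ioo]
        refine lintegral_congr fun r => ?_
        by_cases h0 : 0 < r
        · by_cases h1 : r < 1
          · simp [indicator, h0, h1, hg, norm_smul, hw, abs_of_pos h0]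
          · simp [indicator, h0, h1, hg, norm_smul, hw, abs_of_pos h0]
        · simp [indicator, h0]

lemma lintegral_rpow_Ioo (a : ℝ) (ha : 0 < a) :
    ∫⁻ r in Ioo (0 : ℝ) 1, ENNReal.ofReal (r ^ (a - 1)) = ENNReal.ofReal (1 / a) := by
  have h1 : IntervalIntegrable (fun r : ℝ => r ^ (a - 1)) volume 0 1 :=
    intervalIntegral.intervalIntegrable_rpow' (by linarith)
  rw [Measure.restrict_congr_set Ioo_ae_eq_Ioc,
    ← ofReal_integral_eq_lintegral_ofReal h1.1, ← intervalIntegral.integral_of_le zero_le_one,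
    integral_rpow (Or.inl (by linarith))]
  · simp [Real.zero_rpow ha.ne']
  · filter_upwards [ae_restrict_mem measurableSet_Ioc] with y hy
    exact Real.rpow_nonneg hy.1.le _

lemma lintegral_ball_rescale (N : ℕ) (x : Euc N) (δ : ℝ) (hδ : 0 < δ) (f : Euc N → ℝ≥0∞) :
    ∫⁻ y in ball x δ, f y =
      ENNReal.ofReal (δ ^ N) * ∫⁻ z in ball (0 : Euc N) 1, f (x + δ • z) := by
  have h1 : ∫⁻ z in ball (0 : Euc N) 1, f (x + δ • z) =
      ∫⁻ z : Euc N, (ball x δ).indicator f (x + δ • z) := by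
    rw [← lintegral_indicator measurableSet_ball]
    refine lintegral_congr fun z => ?_
    have : x + δ • z ∈ ball x δ ↔ z ∈ ball (0 : Euc N) 1 := by
      simp [norm_smul, abs_of_pos hδ, hδ]
    by_cases h : z ∈ ball (0 : Euc N) 1
    · rw [indicator_of_mem h, indicator_of_mem (this.2 h)]
    · rw [indicator_of_notMem h, indicator_of_notMem (fun h' => h (this.1 h'))]
  have h2 : ∫⁻ z : Euc N, (ball x δ).indicator f (x + δ • z) =
      ENNReal.ofReal (δ ^ N)⁻¹ * ∫⁻ y : Euc N, (ball x δ).indicator f y := by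
    have hm := Measure.map_addHaar_smul (volume : Measure (Euc N)) hδ.ne'
    rw [← lintegral_add_left_eq_self (μ := (volume : Measure (Euc N)))
      ((ball x δ).indicator f) x]
    have he : MeasurableEmbedding (fun z : Euc N => δ • z) :=
      (Homeomorph.smulOfNeZero δ hδ.ne').measurableEmbedding
    rw [← he.lintegral_map (fun y => (ball x δ).indicator f (x + y))]
    change ∫⁻ y, _ ∂(Measure.map (δ • ·) volume) = _
    rw [hm, lintegral_smul_measure, smul_eq_mul]
    simp [abs_of_pos hδ]
  rw [h1, h2, ← mul_assoc, ← ENNReal.ofReal_mul (by positivity),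
    mul_inv_cancel₀ (by positivity), ENNReal.ofReal_one, one_mul,
    lintegral_indicator measurableSet_ball]

/-- Regular variation with a varying factor: if `T → 0⁺` and `a → b`, then
`G (T a) / G T → b ^ p`. Monotonicity of `G` squeezes the quotient between the quotients for
constant factors slightly below and slightly above `b`; the case `b = 0` is included. -/
lemma regVary_tendsto {ι : Type*} {l : Filter ι} {G : ℝ → ℝ} {p : ℝ} (hp : 0 < p)
    (hG0 : ∀ t, 0 ≤ t → 0 ≤ G t) (hmono : StrictMonoOn G (Ici 0)) (hrv : RegVaryAtZero G p)
    {T a : ι → ℝ} {b : ℝ} (hT : Tendsto T l (𝓝[>] 0)) (ha0 : ∀ᶠ i in l, 0 ≤ a i)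
    (ha : Tendsto a l (𝓝 b)) (hb : 0 ≤ b) :
    Tendsto (fun i => G (T i * a i) / G (T i)) l (𝓝 (b ^ p)) := by
  have hTpos : ∀ᶠ i in l, 0 < T i := hT.eventually self_mem_nhdsWithin
  have hc : Tendsto (fun m : ℝ => m ^ p) (𝓝 b) (𝓝 (b ^ p)) :=
    (Real.continuousAt_rpow_const b p (Or.inr hp.le)).tendsto
  rw [tendsto_order]
  constructor
  · intro c hcb
    rcases hb.eq_or_lt with rfl | hb
    · rw [Real.zero_rpow hp.ne'] at hcb
      filter_upwards [hTpos, ha0] with i h1 h2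
      exact hcb.trans_le (div_nonneg (hG0 _ (by positivity)) (hG0 _ h1.le))
    have hev : ∀ᶠ m in 𝓝[<] b, c < m ^ p ∧ 0 < m ∧ m < b :=
      (((hc.mono_left nhdsWithin_le_nhds).eventually (lt_mem_nhds hcb))).and
        ((eventually_nhdsWithin_of_eventually_nhds (lt_mem_nhds hb)).and self_mem_nhdsWithin)
    obtain ⟨m, hm1, hm0, hmb⟩ := hev.exists
    filter_upwards [hTpos, ((hrv m hm0).comp hT).eventually (lt_mem_nhds hm1),
      ha.eventually (lt_mem_nhds hmb)] with i h1 h2 h3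
    refine h2.trans_le ?_
    simp only [Function.comp]
    have := hG0 _ h1.le
    gcongr
    apply hmono.monotoneOn (mem_Ici.2 (by positivity)) (mem_Ici.2 ?_)
    · rw [mul_comm]; gcongr
    · exact mul_nonneg h1.le (hm0.le.trans h3.le)
  · intro c hcb
    have hev : ∀ᶠ m in 𝓝[>] b, m ^ p < c ∧ b < m :=
      (((hc.mono_left nhdsWithin_le_nhds).eventually (gt_mem_nhds hcb))).and
        self_mem_nhdsWithin
    obtain ⟨m, hm1, hmb⟩ := hev.exists
    have hm0 : 0 < m := hb.trans_lt hmb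
    filter_upwards [hTpos, ((hrv m hm0).comp hT).eventually (gt_mem_nhds hm1),
      ha.eventually (gt_mem_nhds hmb), ha0] with i h1 h2 h3 h4
    refine lt_of_le_of_lt ?_ h2
    simp only [Function.comp]
    have := hG0 _ h1.le
    gcongr
    apply hmono.monotoneOn (mem_Ici.2 (by positivity)) (mem_Ici.2 (by positivity))
    rw [mul_comm]; gcongr

/-- Convexity and `G 0 = 0` give `G (t / 2) ≤ G t / 2`, hence `(1 / 2) ^ p ≤ 1 / 2` in the
limit, which rules out `p ≤ 0`. -/
lemma index_pos {G : ℝ → ℝ} {p : ℝ} (hG : IsOrlicz G) (hrv : RegVaryAtZero G p) : 0 < p := by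
  obtain ⟨hG0, -, hconv, hmono, hz, -⟩ := hG
  have h := hrv (1 / 2) (by norm_num)
  have : (1 / 2 : ℝ) ^ p ≤ 1 / 2 := by
    refine le_of_tendsto h ?_
    filter_upwards [self_mem_nhdsWithin] with t (ht : 0 < t)
    have hpos : 0 < G t := by
      rw [← hz]; exact hmono (mem_Ici.2 le_rfl) (mem_Ici.2 ht.le) ht
    rw [div_le_iff₀ hpos]
    have := hconv.2 (mem_Ici.2 (le_refl (0:ℝ))) (mem_Ici.2 ht.le) (by norm_num : (0:ℝ) ≤ 1 / 2)
      (by norm_num : (0:ℝ) ≤ 1 / 2) (by norm_num)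
    simpa [hz] using this
  by_contra hp
  have := Real.one_le_rpow_of_pos_of_le_one_of_nonpos (by norm_num : (0:ℝ) < 1 / 2) (by norm_num)
    (not_lt.1 hp)
  linarith

/-- The limit integral for a gradient `c • e`: in polar coordinates the radial factor is
`∫₀¹ r ^ ((1 - s) p - 1) dr = 1 / ((1 - s) p)` and the angular factor is `sphereK N p e * c ^ p`. -/
lemma lintegral_limit_polar (N : ℕ) (hN : 1 ≤ N) (s : ℝ) (hs1 : s < 1) (p : ℝ) (hp : 0 < p)
    (e : Euc N) (he : ‖e‖ = 1) (c : ℝ) (hc : 0 ≤ c) :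
    ∫⁻ z in ball (0 : Euc N) 1,
        ENNReal.ofReal ((|⟪c • e, z⟫| / ‖z‖ ^ s) ^ p / ‖z‖ ^ (N : ℝ)) =
      ENNReal.ofReal (1 / ((1 - s) * p)) * ENNReal.ofReal (sphereK N p e * c ^ p) := by
  have hsp : 0 < (1 - s) * p := mul_pos (by linarith) hp
  rw [lintegral_ball_polar N hN _ (by fun_prop)]
  have hint : Integrable (fun w : sphere (0 : Euc N) 1 => |(⟪(w : Euc N), e⟫)| ^ p)
      ((volume : Measure (Euc N)).toSphere) := by
    refine Integrable.of_bound (C := 1) ?_ ?_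
    · exact (Measurable.aestronglyMeasurable (by fun_prop))
    · refine Eventually.of_forall fun w => ?_
      have hw : ‖(w : Euc N)‖ = 1 := by simp
      have h := abs_real_inner_le_norm (w : Euc N) e
      rw [hw, he, one_mul] at h
      rw [Real.norm_of_nonneg (by positivity)]
      exact Real.rpow_le_one (abs_nonneg _) h hp.le
  rw [mul_comm (sphereK N p e), ENNReal.ofReal_mul (by positivity), sphereK,
    ofReal_integral_eq_lintegral_ofReal hint (Eventually.of_forall fun w => by positivity),
    ← mul_assoc, ← lintegral_const_mul _ (by fun_prop)]
  refine lintegral_congr fun w => ?_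
  have hw : ‖(w : Euc N)‖ = 1 := by simp
  rw [← lintegral_rpow_Ioo _ hsp, mul_assoc, ← ENNReal.ofReal_mul (by positivity),
    ← lintegral_mul_const _ (by fun_prop)]
  refine setLIntegral_congr_fun measurableSet_Ioo fun r hr => ?_
  have hr0 : 0 < r := hr.1
  rw [← ENNReal.ofReal_mul (by positivity), ← ENNReal.ofReal_mul (by positivity)]
  congr 1
  rw [inner_smul_left, inner_smul_right, real_inner_comm, norm_smul, hw, Real.norm_of_nonneg hr0.le,
    mul_one, ← Real.rpow_natCast, Nat.cast_sub hN]
  simp only [conj_trivial, abs_mul, abs_of_pos hr0, abs_of_nonneg hc, Nat.cast_one]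
  rw [show c * (r * |⟪(w : Euc N), e⟫|) / r ^ s = r ^ (1 - s) * (c * |⟪(w : Euc N), e⟫|) by
      rw [Real.rpow_sub hr0, Real.rpow_one]; ring,
    Real.mul_rpow (by positivity) (by positivity), ← Real.rpow_mul hr0.le,
    Real.mul_rpow hc (by positivity), Real.rpow_sub hr0, Real.rpow_sub hr0 _ 1, Real.rpow_one]
  have : r ^ (N : ℝ) ≠ 0 := by positivity
  field_simp

/-- The limit integral depends on the gradient only through its norm, because the reflection
exchanging `v` and `v'` preserves the volume, the norm and the inner product. -/
lemma lintegral_limit_rotate (N : ℕ) (s p : ℝ) (v v' : Euc N) (hv : ‖v‖ = ‖v'‖) :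
    ∫⁻ z in ball (0 : Euc N) 1,
        ENNReal.ofReal ((|⟪v, z⟫| / ‖z‖ ^ s) ^ p / ‖z‖ ^ (N : ℝ)) =
      ∫⁻ z in ball (0 : Euc N) 1,
        ENNReal.ofReal ((|⟪v', z⟫| / ‖z‖ ^ s) ^ p / ‖z‖ ^ (N : ℝ)) := by
  let R : Euc N ≃ₗᵢ[ℝ] Euc N := (Submodule.span ℝ {v - v'})ᗮ.reflection
  have hR : R v = v' := Submodule.reflection_sub hv
  have hmp := R.measurePreserving
  have h := hmp.setLIntegral_comp_preimage_emb R.toHomeomorph.measurableEmbedding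
    (fun z => ENNReal.ofReal ((|⟪v', z⟫| / ‖z‖ ^ s) ^ p / ‖z‖ ^ (N : ℝ))) (ball (0 : Euc N) 1)
  rw [← h]
  have hpre : R ⁻¹' ball (0 : Euc N) 1 = ball (0 : Euc N) 1 := by
    ext z; simp
  rw [hpre]
  refine lintegral_congr fun z => ?_
  rw [← hR, R.inner_map_map, R.norm_map]

/-- The dominating function `C ‖z‖ ^ (1 - s - N)` is integrable on the unit ball. -/
lemma lintegral_bound_ne_top (N : ℕ) (hN : 1 ≤ N) (s : ℝ) (hs1 : s < 1) (C : ℝ) :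
    ∫⁻ z in ball (0 : Euc N) 1,
        ENNReal.ofReal (C * (‖z‖ ^ (1 - s) / ‖z‖ ^ (N : ℝ))) ≠ ∞ := by
  rw [lintegral_ball_polar N hN _ (by fun_prop)]
  have : ∀ w : sphere (0 : Euc N) 1, ∫⁻ r in Ioo (0 : ℝ) 1, ENNReal.ofReal (r ^ (N - 1)) *
      ENNReal.ofReal (C * (‖r • (w : Euc N)‖ ^ (1 - s) / ‖r • (w : Euc N)‖ ^ (N : ℝ))) =
      ENNReal.ofReal (1 / (1 - s)) * ENNReal.ofReal C := by
    intro w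
    have hw : ‖(w : Euc N)‖ = 1 := by simp
    rw [← lintegral_rpow_Ioo (1 - s) (by linarith), ← lintegral_mul_const _ (by fun_prop)]
    refine setLIntegral_congr_fun measurableSet_Ioo fun r hr => ?_
    have hr0 : 0 < r := hr.1
    rw [← ENNReal.ofReal_mul (by positivity), ← ENNReal.ofReal_mul (by positivity), norm_smul, hw,
      Real.norm_of_nonneg hr0.le, mul_one, ← Real.rpow_natCast, Nat.cast_sub hN,
      Real.rpow_sub hr0 _ 1, Real.rpow_sub hr0 (N : ℝ), Nat.cast_one]
    congr 1
    have : r ^ (N : ℝ) ≠ 0 := by positivity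
    field_simp
  simp only [this, lintegral_const]
  exact ENNReal.mul_ne_top (by finiteness) (measure_ne_top _ _)

/-- **Pointwise localization** (Proposition 3.1 / `mainprop1`): for `u ∈ C_c²(ℝ^N)`,
`lim_{δ→0⁺} [p(1-s)/G(δ^{1-s})] ∫_{B(x,δ)} G(|u(x)-u(y)|/|x-y|^s)|x-y|^{-N} dy
  = K_{N,p}|∇u(x)|^p`. -/
theorem pointwise_localization
    (N : ℕ) (hN : 1 ≤ N) (s : ℝ) (hs0 : 0 < s) (hs1 : s < 1)
    (G : ℝ → ℝ) (p : ℝ) (hG : HypH G p)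
    (u : Euc N → ℝ) (hu : ContDiff ℝ 2 u) (husupp : HasCompactSupport u)
    (e : Euc N) (he : ‖e‖ = 1) (x : Euc N) :
    Tendsto (fun δ : ℝ => ENNReal.ofReal (p * (1 - s) / G (δ ^ (1 - s))) *
        ∫⁻ y in ball x δ,
          ENNReal.ofReal (G (|u x - u y| / ‖x - y‖ ^ s) / ‖x - y‖ ^ (N : ℝ)))
      (𝓝[>] (0:ℝ))
      (𝓝 (ENNReal.ofReal (sphereK N p e * ‖gradient u x‖ ^ p))) := by

  obtain ⟨hOr, hrv, -, -⟩ := hG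
  have hp : 0 < p := index_pos hOr hrv
  obtain ⟨hG0, hGc, hconv, hmono, hz, -, -⟩ := hOr
  have hGpos : ∀ t, 0 < t → 0 < G t := fun t ht => by
    rw [← hz]; exact hmono (mem_Ici.2 le_rfl) (mem_Ici.2 ht.le) ht
  have : Nonempty (Fin N) := ⟨⟨0, hN⟩⟩
  have hs : 0 < 1 - s := by linarith
  -- difference quotient at scale `δ` in direction `z`, weighted by `‖z‖ ^ (-s)`
  set a : ℝ → Euc N → ℝ := fun δ z => |u (x + δ • z) - u x| / δ / ‖z‖ ^ s with ha
  set J : ℝ → ℝ≥0∞ := fun δ => ∫⁻ z in ball (0 : Euc N) 1,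
    ENNReal.ofReal (G (δ ^ (1 - s) * a δ z) / G (δ ^ (1 - s)) / ‖z‖ ^ (N : ℝ)) with hJ
  set v := gradient u x with hv
  have hlimval : ENNReal.ofReal (sphereK N p e * ‖v‖ ^ p) =
      ENNReal.ofReal (p * (1 - s)) * ∫⁻ z in ball (0 : Euc N) 1,
        ENNReal.ofReal ((|⟪v, z⟫| / ‖z‖ ^ s) ^ p / ‖z‖ ^ (N : ℝ)) := by
    rw [lintegral_limit_rotate N s p v (‖v‖ • e) (by simp [norm_smul, he]),
      lintegral_limit_polar N hN s hs1 p hp e he _ (norm_nonneg v), ← mul_assoc,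
      ← ENNReal.ofReal_mul (by positivity),
      show p * (1 - s) * (1 / ((1 - s) * p)) = 1 by field_simp, ENNReal.ofReal_one, one_mul]
  have hrescale : ∀ δ : ℝ, 0 < δ → ENNReal.ofReal (p * (1 - s)) * J δ =
      ENNReal.ofReal (p * (1 - s) / G (δ ^ (1 - s))) * ∫⁻ y in ball x δ,
          ENNReal.ofReal (G (|u x - u y| / ‖x - y‖ ^ s) / ‖x - y‖ ^ (N : ℝ)) := by
    intro δ hδ
    have hGT := hGpos (δ ^ (1 - s)) (by positivity)
    rw [lintegral_ball_rescale N x δ hδ, ← mul_assoc, ← ENNReal.ofReal_mul (by positivity),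
      hJ, ← lintegral_const_mul' _ _ ENNReal.ofReal_ne_top,
      ← lintegral_const_mul' _ _ ENNReal.ofReal_ne_top]
    refine lintegral_congr fun z => ?_
    rw [← ENNReal.ofReal_mul (by positivity), ← ENNReal.ofReal_mul (by positivity)]
    congr 1
    have h1 : |u x - u (x + δ • z)| / ‖x - (x + δ • z)‖ ^ s = δ ^ (1 - s) * a δ z := by
      simp only [ha]
      rw [abs_sub_comm, sub_add_cancel_left, norm_neg, norm_smul, Real.norm_of_nonneg hδ.le,
        Real.mul_rpow hδ.le (norm_nonneg z), Real.rpow_sub hδ, Real.rpow_one]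
      field_simp
    have h2 : ‖x - (x + δ • z)‖ ^ (N : ℝ) = δ ^ N * ‖z‖ ^ (N : ℝ) := by
      rw [sub_add_cancel_left, norm_neg, norm_smul, Real.norm_of_nonneg hδ.le,
        Real.mul_rpow hδ.le (norm_nonneg z), Real.rpow_natCast]
    rw [h1, h2]
    field_simp
  rw [hlimval]
  suffices hmain : Tendsto J (𝓝[>] (0:ℝ)) (𝓝 (∫⁻ z in ball (0 : Euc N) 1,
      ENNReal.ofReal ((|⟪v, z⟫| / ‖z‖ ^ s) ^ p / ‖z‖ ^ (N : ℝ)))) by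
    refine (ENNReal.Tendsto.const_mul hmain (Or.inr ENNReal.ofReal_ne_top)).congr' ?_
    filter_upwards [self_mem_nhdsWithin] with δ hδ
    exact hrescale δ hδ
  have hT : Tendsto (fun δ : ℝ => δ ^ (1 - s)) (𝓝[>] (0:ℝ)) (𝓝[>] (0:ℝ)) := by
    refine tendsto_nhdsWithin_iff.2 ⟨?_, ?_⟩
    · have := (Real.continuousAt_rpow_const 0 (1 - s) (Or.inr hs.le)).tendsto
      rw [Real.zero_rpow hs.ne'] at this
      exact this.mono_left nhdsWithin_le_nhds
    · filter_upwards [self_mem_nhdsWithin] with δ hδ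
      exact Real.rpow_pos_of_pos hδ _
  obtain ⟨L, hL⟩ := hu.lipschitzWith_of_hasCompactSupport husupp (by norm_num)
  set M : ℝ := L + 1 with hM
  have hMpos : 0 < M := by positivity
  have hapos : ∀ δ, 0 < δ → ∀ z, 0 ≤ a δ z := fun δ hδ z => by simp only [ha]; positivity
  have hale : ∀ δ, 0 < δ → ∀ z, z ≠ 0 → a δ z ≤ ‖z‖ ^ (1 - s) * M := by
    intro δ hδ z hz0
    have hzn : 0 < ‖z‖ := norm_pos_iff.2 hz0
    have h := hL.dist_le_mul (x + δ • z) x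
    rw [Real.dist_eq, dist_eq_norm, add_sub_cancel_left, norm_smul, Real.norm_of_nonneg hδ.le] at h
    simp only [ha]
    rw [Real.rpow_sub hzn, Real.rpow_one, div_le_iff₀ (by positivity), div_le_iff₀ hδ]
    calc |u (x + δ • z) - u x| ≤ L * (δ * ‖z‖) := h
      _ ≤ M * (δ * ‖z‖) := by gcongr; simp [hM]
      _ = _ := by field_simp
  refine tendsto_lintegral_filter_of_dominated_convergence'
    (fun z => ENNReal.ofReal ((M ^ p + 1) * (‖z‖ ^ (1 - s) / ‖z‖ ^ (N : ℝ)))) ?_ ?_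
    (lintegral_bound_ne_top N hN s hs1 _) ?_
  · filter_upwards [self_mem_nhdsWithin] with δ (hδ : 0 < δ)
    -- `G` is only controlled on `[0, ∞)`, so it is replaced by a continuous extension
    have hGm : Measurable (fun t : ℝ => G (max t 0)) :=
      (hGc.comp_continuous (by fun_prop) (fun t => le_max_right t 0)).measurable
    have hum : Continuous u := hu.continuous
    have ham : Measurable (a δ) := by
      simp only [ha]; fun_prop
    have : Measurable (fun z => G (max (δ ^ (1 - s) * a δ z) 0)) :=
      hGm.comp (ham.const_mul _)
    have heq : (fun z => G (δ ^ (1 - s) * a δ z)) =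
        fun z => G (max (δ ^ (1 - s) * a δ z) 0) := by
      funext z
      rw [max_eq_left (mul_nonneg (by positivity) (hapos δ hδ z))]
    rw [← heq] at this
    exact (((this.div_const _).div (by fun_prop)).ennreal_ofReal).aemeasurable
  · have hMlim := ((hrv M hMpos).comp hT).eventually (gt_mem_nhds (lt_add_one (M ^ p)))
    filter_upwards [self_mem_nhdsWithin, hMlim] with δ (hδ : 0 < δ) hδM
    filter_upwards [ae_restrict_mem measurableSet_ball,
      ae_restrict_of_ae (compl_mem_ae_iff.2 (measure_singleton (0 : Euc N)))] with z hz1 hz0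
    have hz0 : z ≠ 0 := hz0
    have hzn : 0 < ‖z‖ := norm_pos_iff.2 hz0
    have hz1 : ‖z‖ ≤ 1 := (mem_ball_zero_iff.1 hz1).le
    set T := δ ^ (1 - s) with hTdef
    have hTpos : 0 < T := by positivity
    have hGT := hGpos T hTpos
    simp only [Function.comp, ← hTdef] at hδM
    rw [div_lt_iff₀ hGT] at hδM
    have hθ0 : 0 ≤ ‖z‖ ^ (1 - s) := by positivity
    have hθ1 : ‖z‖ ^ (1 - s) ≤ 1 := Real.rpow_le_one hzn.le hz1 hs.le
    have hMT : 0 ≤ M * T := by positivity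
    -- convexity and `G 0 = 0` give `G (θ t) ≤ θ G t` for `0 ≤ θ ≤ 1`
    have hcx : G (‖z‖ ^ (1 - s) * (M * T)) ≤ ‖z‖ ^ (1 - s) * G (M * T) := by
      have := hconv.2 (mem_Ici.2 (le_refl (0:ℝ))) (mem_Ici.2 hMT) (sub_nonneg.2 hθ1) hθ0 (by ring)
      simpa [hz] using this
    have hGle : G (T * a δ z) ≤ ‖z‖ ^ (1 - s) * ((M ^ p + 1) * G T) := by
      refine le_trans ?_ (hcx.trans (by gcongr))
      refine hmono.monotoneOn (mem_Ici.2 (mul_nonneg hTpos.le (hapos δ hδ z)))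
        (mem_Ici.2 (by positivity)) ?_
      calc T * a δ z ≤ T * (‖z‖ ^ (1 - s) * M) := by gcongr; exact hale δ hδ z hz0
        _ = _ := by ring
    have hfin : G (T * a δ z) / G T / ‖z‖ ^ (N : ℝ) ≤
        (M ^ p + 1) * (‖z‖ ^ (1 - s) / ‖z‖ ^ (N : ℝ)) := by
      rw [← mul_div_assoc (M ^ p + 1)]
      refine div_le_div_of_nonneg_right ?_ (Real.rpow_nonneg hzn.le _)
      rw [div_le_iff₀ hGT]
      linarith
    exact ENNReal.ofReal_le_ofReal hfin
  · refine Eventually.of_forall fun z => ENNReal.tendsto_ofReal ?_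
    refine Tendsto.div_const ?_ _
    refine regVary_tendsto hp hG0 hmono hrv hT ?_ ?_ (by positivity)
    · filter_upwards [self_mem_nhdsWithin] with δ hδ
      exact hapos δ hδ z
    · simp only [ha]
      refine Tendsto.div_const ?_ _
      have hd : DifferentiableAt ℝ u x := (hu.differentiable (by norm_num)) x
      have hlin := (hd.hasGradientAt.hasFDerivAt.hasLineDerivAt z).tendsto_slope_zero_right
      have := hlin.abs
      simp only [InnerProductSpace.toDual_apply_apply] at this
      refine this.congr' ?_
      filter_upwards [self_mem_nhdsWithin] with δ (hδ : 0 < δ)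
      rw [smul_eq_mul, abs_mul, abs_inv, abs_of_pos hδ]
      field_simp
end
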